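/- arXiv:1109.3761 — 2 statements merged into one kernel-verified Lean document; each statement's English description precedes it below -/
import Mathlib

section
/- Suppose P is a minimal graded projective resolution of the trivial A-module A_0 in which each P_n is finitely generated with generators in degree δ^d_p(n). If i, j ∈ ℕ satisfy δ^d_p(i+j) = δ^d_p(i) + δ^d_p(j), then the Yoneda multiplication map Ext^i_A(A_0,A_0) ⊗_F Ext^j_A(A_0,A_0) → Ext^{i+j}_A(A_0,A_0) is surjective; moreover Ext^{i+j}_A(A_0,A_0) = Ext^i_A(A_0,A_0)·Ext^j_A(A_0,A_0) = Ext^j_A(A_0,A_0)·Ext^i_A(A_0,A_0). -/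
noncomputable section

/-- The jump function `δ^d_p(n) = ((n − (n mod p))/p)·d + (n mod p)`. -/
def jump (d p n : ℕ) : ℕ := (n - n % p) / p * d + n % p

/-- A positively graded `F`-algebra `A = ⊕_{i≥0} A_i`. -/
structure GradedAlg (F : Type) [Field F] where
  A : Type
  [ringA : Ring A]
  [algA : Algebra F A]
  grading : ℕ → Submodule F A
  [graded : GradedAlgebra grading]

attribute [instance] GradedAlg.ringA GradedAlg.algA GradedAlg.graded

namespace GradedAlg

variable {F : Type} [Field F] (𝒜 : GradedAlg F)

/-- The graded Jacobson radical `J = ⊕_{i≥1} A_i`, i.e. the irrelevant ideal. -/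
def jideal : Ideal 𝒜.A := (HomogeneousIdeal.irrelevant 𝒜.grading).toIdeal

/-- The standing assumptions: `A_0` is a semisimple Artin algebra, `A` is generated in
degrees 0 and 1 (`A_i · A_j = A_{i+j}`), and `A_1` is finite dimensional over `F`. -/
structure Standing : Prop where
  semisimple : IsSemisimpleRing ↥(𝒜.grading 0)
  artinian : IsArtinianRing ↥(𝒜.grading 0)
  gen01 : ∀ i j : ℕ, 𝒜.grading i * 𝒜.grading j = 𝒜.grading (i + j)
  findim : FiniteDimensional F ↥(𝒜.grading 1)

/-- A (ℤ-)graded module over the graded algebra `𝒜`. -/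
structure GMod where
  M : Type
  [acg : AddCommGroup M]
  [modF : Module F M]
  [modA : Module 𝒜.A M]
  [tower : IsScalarTower F 𝒜.A M]
  [scomm : SMulCommClass 𝒜.A F M]
  grading : ℤ → Submodule F M
  sup_eq_top : (⨆ j : ℤ, grading j) = ⊤
  indep : iSupIndep grading
  smul_mem : ∀ {i : ℕ} {j : ℤ} {a : 𝒜.A} {m : M},
    a ∈ 𝒜.grading i → m ∈ grading j → a • m ∈ grading ((i : ℤ) + j)

attribute [instance] GMod.acg GMod.modF GMod.modA GMod.tower GMod.scomm

variable {𝒜}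

/-- A degree-zero morphism of graded modules. -/
structure GHom (M N : 𝒜.GMod) where
  lin : M.M →ₗ[𝒜.A] N.M
  grad : ∀ (j : ℤ) (x : M.M), x ∈ M.grading j → lin x ∈ N.grading j

/-- A graded module is generated in degree `s` if `A · M_s = M`. -/
def GMod.GenInDeg (M : 𝒜.GMod) (s : ℤ) : Prop :=
  Submodule.span 𝒜.A (M.grading s : Set M.M) = ⊤

/-- `T` is the trivial graded module `A_0 = A/J`, concentrated in degree `0`. -/
def IsTrivialGMod (T : 𝒜.GMod) : Prop :=
  (∀ j : ℤ, j ≠ 0 → T.grading j = ⊥) ∧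
    Nonempty (T.M ≃ₗ[𝒜.A] (𝒜.A ⧸ 𝒜.jideal))

/-- A minimal graded projective resolution
`⋯ → P_{n+1} → P_n → ⋯ → P_0 → M → 0` of the graded module `M`,
with finitely generated terms. -/
structure MinRes (M : 𝒜.GMod) where
  P : ℕ → 𝒜.GMod
  d : ∀ n : ℕ, GHom (P (n + 1)) (P n)
  aug : GHom (P 0) M
  fg : ∀ n, Module.Finite 𝒜.A (P n).M
  projective : ∀ n, Module.Projective 𝒜.A (P n).M
  aug_surj : Function.Surjective aug.lin
  exact_aug : LinearMap.range (d 0).lin = LinearMap.ker aug.lin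
  exact : ∀ n, LinearMap.range (d (n + 1)).lin = LinearMap.ker (d n).lin
  minimal : ∀ n, LinearMap.range (d n).lin ≤ 𝒜.jideal • (⊤ : Submodule 𝒜.A (P n).M)

variable (𝒜)

/-- `M` is a piecewise-Koszul module (period `p`, jump degree `d`, shift `s`):
it has a minimal graded projective resolution with `P_n` generated in degree `δ^d_p(n) + s`. -/
def IsPKMod (p d : ℕ) (s : ℤ) (M : 𝒜.GMod) : Prop :=
  ∃ R : MinRes M, ∀ n : ℕ, (R.P n).GenInDeg ((jump d p n : ℤ) + s)

/-- `A` is a piecewise-Koszul algebra (period `p`, jump degree `d`): the trivial module `T`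
admits a minimal graded projective resolution with `P_n` generated in degree `δ^d_p(n)`. -/
def IsPKAlg (p d : ℕ) (T : 𝒜.GMod) : Prop := IsPKMod 𝒜 p d 0 T

/-- A Koszul module: a minimal graded projective resolution with `P_n` generated in degree `n`. -/
def IsKoszulMod (M : 𝒜.GMod) : Prop :=
  ∃ R : MinRes M, ∀ n : ℕ, (R.P n).GenInDeg (n : ℤ)

variable {𝒜}

section Ext

variable (T : 𝒜.GMod) {M : 𝒜.GMod}

/-- The space of `A`-linear maps `P_n → T` (cochains). -/
abbrev HomSp (R : MinRes M) (n : ℕ) := (R.P n).M →ₗ[𝒜.A] T.M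

/-- Precomposition, as an `F`-linear map on cochains. -/
def precompF {M₁ M₂ : 𝒜.GMod} (g : M₁.M →ₗ[𝒜.A] M₂.M) :
    (M₂.M →ₗ[𝒜.A] T.M) →ₗ[F] (M₁.M →ₗ[𝒜.A] T.M) where
  toFun f := f ∘ₗ g
  map_add' f₁ f₂ := by ext x; simp
  map_smul' c f := by ext x; simp

/-- Cocycles: maps `P_n → T` vanishing on the image of `P_{n+1}`. -/
def cocyc (R : MinRes M) (n : ℕ) : Submodule F (HomSp T R n) :=
  LinearMap.ker (precompF T (R.d n).lin)

/-- Coboundaries: maps `P_n → T` factoring through `d_{n-1}`. -/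
def cobound (R : MinRes M) : (n : ℕ) → Submodule F (HomSp T R n)
  | 0 => ⊥
  | n + 1 => LinearMap.range (precompF T (R.d n).lin)

/-- The coboundaries, viewed inside the cocycles. -/
def extRel (R : MinRes M) (n : ℕ) : Submodule F ↥(cocyc T R n) :=
  (cobound T R n).comap (cocyc T R n).subtype

/-- `Ext^n_A(M, T)`, computed from the resolution `R` of `M`. -/
abbrev ExtQ (R : MinRes M) (n : ℕ) := ↥(cocyc T R n) ⧸ extRel T R n

/-- The class in `Ext^n_A(M,T)` of a cocycle. -/
def extCls {R : MinRes M} {n : ℕ} {f : HomSp T R n} (hf : f ∈ cocyc T R n) :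
    ExtQ T R n :=
  Submodule.Quotient.mk ⟨f, hf⟩

/-- Cochains of shift-degree `j`: maps `P_n → T` vanishing on every `(P_n)_i` with `i ≠ j`. -/
def homDeg (R : MinRes M) (n : ℕ) (j : ℤ) : Submodule F (HomSp T R n) where
  carrier := {f | ∀ i : ℤ, i ≠ j → ∀ x ∈ (R.P n).grading i, f x = 0}
  add_mem' := fun hf hg i hi x hx => by
    simp only [LinearMap.add_apply, hf i hi x hx, hg i hi x hx, add_zero]
  zero_mem' := fun i hi x hx => rfl
  smul_mem' := fun c f hf i hi x hx => by
    simp only [LinearMap.smul_apply, hf i hi x hx, smul_zero]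

/-- The shift-degree `j` component `Ext^n_A(M,T)_j`. -/
def extComp (R : MinRes M) (n : ℕ) (j : ℤ) : Submodule F (ExtQ T R n) :=
  Submodule.map (extRel T R n).mkQ ((homDeg T R n j).comap (cocyc T R n).subtype)

/-- Transport `Ext` along an equality of cohomological degrees. -/
def extCast (R : MinRes M) {a b : ℕ} (h : a = b) : ExtQ T R a ≃ₗ[F] ExtQ T R b :=
  h ▸ LinearEquiv.refl F (ExtQ T R a)

/-- A chain map lifting of a cochain `g : P_j → T` over the resolutions `RM` of `M`
and `RT` of `T`. -/
structure ChainLift (RT : MinRes T) (RM : MinRes M) (j : ℕ)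
    (g : (RM.P j).M →ₗ[𝒜.A] T.M) where
  ℓ : ∀ m k : ℕ, m = k + j → ((RM.P m).M →ₗ[𝒜.A] (RT.P k).M)
  comm_aug : RT.aug.lin ∘ₗ ℓ j 0 (by omega) = g
  comm : ∀ k : ℕ, (RT.d k).lin ∘ₗ ℓ (k + j + 1) (k + 1) (by omega) =
    ℓ (k + j) k rfl ∘ₗ (RM.d (k + j)).lin

/-- `μ` is the (bigraded family of) Yoneda product(s)
`Ext^i(T,T) ⊗ Ext^j(M,T) → Ext^{i+j}(M,T)`: it is computed by composing a cocycle
`f : P_i → T` with a chain lifting of a cocycle `g : Q_j → T`. -/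
def IsYonedaMul (RT : MinRes T) (RM : MinRes M)
    (μ : ∀ i j : ℕ, ExtQ T RT i →ₗ[F] ExtQ T RM j →ₗ[F] ExtQ T RM (i + j)) : Prop :=
  ∀ (i j : ℕ) (f : HomSp T RT i) (hf : f ∈ cocyc T RT i)
    (g : HomSp T RM j) (hg : g ∈ cocyc T RM j)
    (L : ChainLift T RT RM j g)
    (hc : f ∘ₗ L.ℓ (i + j) i (by omega) ∈ cocyc T RM (i + j)),
    μ i j (extCls T hf) (extCls T hg) = extCls T hc

/-- `E(A) = Ext^*_A(A_0,A_0)` is generated in the ext-degrees belonging to `S`. -/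
def ExtGenIn (RT : MinRes T)
    (μ : ∀ i j : ℕ, ExtQ T RT i →ₗ[F] ExtQ T RT j →ₗ[F] ExtQ T RT (i + j))
    (S : Set ℕ) : Prop :=
  ∀ W : (n : ℕ) → Submodule F (ExtQ T RT n),
    (∀ n ∈ S, W n = ⊤) →
    (∀ (i j : ℕ) (x : ExtQ T RT i) (y : ExtQ T RT j),
      x ∈ W i → y ∈ W j → μ i j x y ∈ W (i + j)) →
    ∀ n, W n = ⊤

/-- `E(M) = Ext^*_A(M,A_0)` is generated in degree `0` as a graded `E(A)`-module. -/
def ExtModGenInZero (RT : MinRes T) (RM : MinRes M)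
    (μ : ∀ i j : ℕ, ExtQ T RT i →ₗ[F] ExtQ T RM j →ₗ[F] ExtQ T RM (i + j)) : Prop :=
  ∀ W : (n : ℕ) → Submodule F (ExtQ T RM n),
    W 0 = ⊤ →
    (∀ (i j : ℕ) (x : ExtQ T RT i) (y : ExtQ T RM j),
      y ∈ W j → μ i j x y ∈ W (i + j)) →
    ∀ n, W n = ⊤

end Ext

/-- `JM` is (a graded module isomorphic to) the submodule `J·M` of `M`. -/
def IsJM (M JM : 𝒜.GMod) : Prop :=
  ∃ e : JM.M ≃ₗ[𝒜.A] ↥(𝒜.jideal • (⊤ : Submodule 𝒜.A M.M)),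
    ∀ (j : ℤ) (x : JM.M), x ∈ JM.grading j ↔ ((e x : M.M) ∈ M.grading j)

/-- `Q` is (a graded module isomorphic to) the quotient `M/JM`. -/
def IsQuotJM (M Q : 𝒜.GMod) : Prop :=
  ∃ e : Q.M ≃ₗ[𝒜.A] (M.M ⧸ (𝒜.jideal • (⊤ : Submodule 𝒜.A M.M))),
    ∀ j : ℤ, Q.grading j = Submodule.map
      ((e.symm.toLinearMap ∘ₗ (𝒜.jideal • (⊤ : Submodule 𝒜.A M.M)).mkQ).restrictScalars F)
      (M.grading j)

/-- `W` is (isomorphic to) the `n`-th syzygy `Ω^n(M)` of `M` in the minimal graded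
projective resolution `R`. -/
def IsSyzygy {M : 𝒜.GMod} (R : MinRes M) : ℕ → 𝒜.GMod → Prop
  | 0, W => ∃ e : W.M ≃ₗ[𝒜.A] M.M,
      ∀ (j : ℤ) (x : W.M), x ∈ W.grading j ↔ e x ∈ M.grading j
  | 1, W => ∃ e : W.M ≃ₗ[𝒜.A] ↥(LinearMap.ker R.aug.lin),
      ∀ (j : ℤ) (x : W.M), x ∈ W.grading j ↔ ((e x : (R.P 0).M) ∈ (R.P 0).grading j)
  | (n + 2), W => ∃ e : W.M ≃ₗ[𝒜.A] ↥(LinearMap.ker (R.d n).lin),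
      ∀ (j : ℤ) (x : W.M), x ∈ W.grading j ↔ ((e x : (R.P (n + 1)).M) ∈ (R.P (n + 1)).grading j)

end GradedAlg

/-!
Graded `A`-modules are modules over the smash product of `A` with `ℤ`, and the Yoneda product is
composition of chain maps, so the task is to factor a cochain `P_{i+j} → A_0`, generated in degree
`a + b`, through a chain map from `P_{j+•}` to a sum of copies of the resolution `P_•` of `A_0`.
Shift degrees by `-(a + b)`. Then `N = coker (P_{j+1} → P_j)` lives in degrees `≥ u = -a`, and all
of `Ext^i(N, A_0)` comes from some `N → A_0^(I)`, with `A_0` placed in degree `u`: the component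
of `N` in degree `u` is a semisimple quotient of `N`, hence a summand of some `A_0^(I)`, and the
kernel `K` of this quotient map lives in degrees `> u`, which forces `Ext^i(K, A_0) = 0`. Indeed,
by induction on the lowest degree, `Ext^i(K, A_0)` comes from modules `Ext^i(A_0^(I), A_0)` with
`A_0` in degree `≥ u + 1`; these vanish because `P_i` is generated in degree `a` and
`a + u + 1 > 0`. Lifting `N → A_0^(I)` to resolutions yields the chain map.
-/

namespace GradedAlg

variable {F : Type} [Field F] {𝒜 : GradedAlg F}

/-! ### The smash product with `ℤ` -/

section Graded

open DirectSum

variable (𝒜) in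
/-- The defining relations of `Smash 𝒜`. -/
inductive SmashRel : FreeAlgebra F (𝒜.A ⊕ ℤ) → FreeAlgebra F (𝒜.A ⊕ ℤ) → Prop
  | add (a b : 𝒜.A) : SmashRel (.ι F (.inl a) + .ι F (.inl b)) (.ι F (.inl (a + b)))
  | mul (a b : 𝒜.A) : SmashRel (.ι F (.inl a) * .ι F (.inl b)) (.ι F (.inl (a * b)))
  | algebraMap (c : F) : SmashRel (.ι F (.inl (algebraMap F 𝒜.A c))) (algebraMap F _ c)
  | idem (k : ℤ) : SmashRel (.ι F (.inr k) * .ι F (.inr k)) (.ι F (.inr k))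
  | orthogonal {k l : ℤ} (h : k ≠ l) : SmashRel (.ι F (.inr k) * .ι F (.inr l)) 0
  | homogeneous {i : ℕ} {a : 𝒜.A} (ha : a ∈ 𝒜.grading i) (k : ℤ) :
      SmashRel (.ι F (.inr (i + k)) * .ι F (.inl a)) (.ι F (.inl a) * .ι F (.inr k))

variable (𝒜) in
/-- The smash product of `𝒜` with the grading group `ℤ`: the algebra generated by `A` and
orthogonal idempotents `e k`, subject to `e (i + k) * a = a * e k` for `a ∈ A_i`. Graded
`𝒜`-modules are `Smash 𝒜`-modules on which `e k` acts as the projection to degree `k`, so that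
the homological algebra of graded modules takes place in `ModuleCat (Smash 𝒜)`. -/
def Smash : Type := RingQuot (SmashRel 𝒜)

namespace Smash

instance : Ring (Smash 𝒜) := inferInstanceAs (Ring (RingQuot (SmashRel 𝒜)))

instance : Algebra F (Smash 𝒜) := inferInstanceAs (Algebra F (RingQuot (SmashRel 𝒜)))

/-- The presentation of the smash product by generators and relations. -/
def mk : FreeAlgebra F (𝒜.A ⊕ ℤ) →ₐ[F] Smash 𝒜 := RingQuot.mkAlgHom F (SmashRel 𝒜)

lemma mk_eq_mk {x y : FreeAlgebra F (𝒜.A ⊕ ℤ)} (h : SmashRel 𝒜 x y) : mk x = mk y :=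
  RingQuot.mkAlgHom_rel F h

/-- The universal property of the smash product. -/
def lift {B : Type*} [Semiring B] [Algebra F B] (f : FreeAlgebra F (𝒜.A ⊕ ℤ) →ₐ[F] B)
    (h : ∀ ⦃x y⦄, SmashRel 𝒜 x y → f x = f y) : Smash 𝒜 →ₐ[F] B :=
  RingQuot.liftAlgHom F ⟨f, h⟩

lemma lift_mk {B : Type*} [Semiring B] [Algebra F B] (f : FreeAlgebra F (𝒜.A ⊕ ℤ) →ₐ[F] B)
    (h : ∀ ⦃x y⦄, SmashRel 𝒜 x y → f x = f y) (x : FreeAlgebra F (𝒜.A ⊕ ℤ)) :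
    lift f h (mk x) = f x :=
  RingQuot.liftAlgHom_mkAlgHom_apply F f h x

/-- The idempotent projecting to degree `k`. -/
def e (k : ℤ) : Smash 𝒜 := mk (.ι F (.inr k))

/-- The inclusion of `A` into its smash product. -/
def of : 𝒜.A →ₐ[F] Smash 𝒜 :=
  AlgHom.ofLinearMap
    { toFun a := mk (.ι F (.inl a))
      map_add' a b := by rw [← mk_eq_mk (.add a b), map_add]
      map_smul' c a := by
        rw [Algebra.smul_def, ← mk_eq_mk (.mul _ a), map_mul, mk_eq_mk (.algebraMap c),
          AlgHom.commutes, RingHom.id_apply, Algebra.smul_def] }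
    (by
      rw [LinearMap.coe_mk, AddHom.coe_mk, ← map_one (algebraMap F 𝒜.A),
        mk_eq_mk (.algebraMap 1), map_one, map_one])
    (fun a b => by
      simp only [LinearMap.coe_mk, AddHom.coe_mk, ← mk_eq_mk (.mul a b), map_mul])

lemma e_mul_self (k : ℤ) : e k * e k = (e k : Smash 𝒜) := by
  rw [e, ← map_mul, mk_eq_mk (.idem k)]

lemma e_mul_of_ne {k l : ℤ} (h : k ≠ l) : e k * e l = (0 : Smash 𝒜) := by
  rw [e, e, ← map_mul, mk_eq_mk (.orthogonal h), map_zero]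

lemma e_mul_of {i : ℕ} {a : 𝒜.A} (ha : a ∈ 𝒜.grading i) (k : ℤ) :
    e (i + k) * of a = of a * e k := by
  change mk _ * mk _ = mk _ * mk _
  rw [← map_mul, ← map_mul, mk_eq_mk (.homogeneous ha k)]

@[elab_as_elim]
lemma induction {motive : Smash 𝒜 → Prop} (of : ∀ a, motive (of a)) (e : ∀ k, motive (e k))
    (add : ∀ r s, motive r → motive s → motive (r + s))
    (mul : ∀ r s, motive r → motive s → motive (r * s)) (r : Smash 𝒜) : motive r := by
  obtain ⟨x, rfl⟩ := RingQuot.mkAlgHom_surjective F (SmashRel 𝒜) r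
  change motive (mk x)
  induction x using FreeAlgebra.induction with
  | grade0 c =>
    rw [← mk_eq_mk (.algebraMap c)]
    exact of _
  | grade1 x => exact x.rec of e
  | mul x y hx hy => rw [map_mul]; exact mul _ _ hx hy
  | add x y hx hy => rw [map_add]; exact add _ _ hx hy

variable {X Y : Type*} [AddCommGroup X] [Module (Smash 𝒜) X] [AddCommGroup Y]
  [Module (Smash 𝒜) Y]

lemma e_smul_e_smul (k : ℤ) (x : X) :
    (e k : Smash 𝒜) • (e k : Smash 𝒜) • x = (e k : Smash 𝒜) • x := by
  rw [smul_smul, e_mul_self]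

lemma e_smul_e_smul_of_ne {k l : ℤ} (h : k ≠ l) (x : X) :
    (e k : Smash 𝒜) • (e l : Smash 𝒜) • x = 0 := by
  rw [smul_smul, e_mul_of_ne h, zero_smul]

lemma e_smul_of_smul {i : ℕ} {a : 𝒜.A} (ha : a ∈ 𝒜.grading i) (k : ℤ) (x : X) :
    (e k : Smash 𝒜) • of a • x = of a • (e (k - i) : Smash 𝒜) • x := by
  rw [smul_smul, smul_smul, ← e_mul_of ha, add_sub_cancel]

lemma induction_of_homogeneous {motive : 𝒜.A → Prop} (zero : motive 0)
    (homogeneous : ∀ i, ∀ a ∈ 𝒜.grading i, motive a)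
    (add : ∀ a b, motive a → motive b → motive (a + b)) (a : 𝒜.A) : motive a :=
  Decomposition.inductionOn 𝒜.grading zero (fun {i} x => homogeneous i x x.2) add a

/-- An additive map commuting with the homogeneous elements of `A` and preserving degrees. -/
def linearMapMk (f : X →+ Y)
    (map_of : ∀ i, ∀ a ∈ 𝒜.grading i, ∀ x, f (of a • x) = of a • f x)
    (map_e : ∀ k x, f ((e k : Smash 𝒜) • x) = (e k : Smash 𝒜) • f x) : X →ₗ[Smash 𝒜] Y where
  toFun := f
  map_add' := map_add f
  map_smul' r x := by
    induction r using induction generalizing x with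
    | of a =>
      induction a using induction_of_homogeneous with
      | zero => simp
      | homogeneous i a ha => exact map_of i a ha x
      | add a b ha hb => simp only [map_add, add_smul, ha, hb, RingHom.id_apply]
    | e k => exact map_e k x
    | add r s hr hs => simp only [add_smul, map_add, hr, hs, RingHom.id_apply]
    | mul r s hr hs => simp only [mul_smul, hr, hs, RingHom.id_apply]

variable (𝒜) in
/-- The element `x` is the sum of its components in finitely many of the degrees in `D`. -/
def SupportedIn (D : Set ℤ) (x : X) : Prop :=
  ∃ S : Finset ℤ, ↑S ⊆ D ∧ ∑ k ∈ S, (e k : Smash 𝒜) • x = x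

variable (𝒜) in
/-- The `Smash 𝒜`-module `X` is graded and its components outside the degrees in `D` are zero.
(Not every `Smash 𝒜`-module is graded, since `Smash 𝒜` has no element `∑ k, e k`.) -/
def HasDegreesIn (D : Set ℤ) (X : Type*) [AddCommGroup X] [Module (Smash 𝒜) X] : Prop :=
  ∀ x : X, SupportedIn 𝒜 D x

lemma e_smul_eq_zero_of_sum_eq {S : Finset ℤ} {x : X} (hS : ∑ k ∈ S, (e k : Smash 𝒜) • x = x)
    {l : ℤ} (hl : l ∉ S) : (e l : Smash 𝒜) • x = 0 := by
  rw [← hS, Finset.smul_sum]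
  exact Finset.sum_eq_zero fun k hk => e_smul_e_smul_of_ne (by rintro rfl; exact hl hk) x

lemma sum_e_smul_eq_of_subset {S S' : Finset ℤ} {x : X}
    (hS : ∑ k ∈ S, (e k : Smash 𝒜) • x = x) (h : S ⊆ S') : ∑ k ∈ S', (e k : Smash 𝒜) • x = x := by
  rw [← Finset.sum_subset h fun k _ hk => e_smul_eq_zero_of_sum_eq hS hk, hS]

namespace SupportedIn

variable {D : Set ℤ} {x y : X}

lemma zero : SupportedIn 𝒜 D (0 : X) := ⟨∅, by simp, by simp⟩

lemma of_e_smul_eq {k : ℤ} (hk : k ∈ D) (hx : (e k : Smash 𝒜) • x = x) : SupportedIn 𝒜 D x :=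
  ⟨{k}, by simpa, by simpa⟩

lemma add (hx : SupportedIn 𝒜 D x) (hy : SupportedIn 𝒜 D y) : SupportedIn 𝒜 D (x + y) := by
  classical
  obtain ⟨S, hS, hx⟩ := hx
  obtain ⟨S', hS', hy⟩ := hy
  refine ⟨S ∪ S', by simp [hS, hS'], ?_⟩
  simp only [smul_add, Finset.sum_add_distrib,
    sum_e_smul_eq_of_subset hx Finset.subset_union_left,
    sum_e_smul_eq_of_subset hy Finset.subset_union_right]

lemma e_smul (hx : SupportedIn 𝒜 D x) (l : ℤ) : SupportedIn 𝒜 D ((e l : Smash 𝒜) • x) := by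
  obtain ⟨S, hS, hx⟩ := hx
  by_cases hl : l ∈ S
  · exact of_e_smul_eq (hS hl) (e_smul_e_smul l x)
  · exact e_smul_eq_zero_of_sum_eq hx hl ▸ zero

lemma of_smul (hD : IsUpperSet D) (hx : SupportedIn 𝒜 D x) (a : 𝒜.A) :
    SupportedIn 𝒜 D (of a • x) := by
  induction a using induction_of_homogeneous with
  | zero => simpa using zero
  | homogeneous i a ha =>
    obtain ⟨S, hS, hx⟩ := hx
    refine ⟨S.map (addRightEmbedding (i : ℤ)), ?_, ?_⟩
    · simpa [Set.subset_def] using fun k hk => hD (by omega) (hS hk)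
    · simp only [Finset.sum_map, addRightEmbedding_apply, e_smul_of_smul ha,
        add_sub_cancel_right, ← Finset.smul_sum, hx]
  | add a b ha hb => simpa only [map_add, add_smul] using ha.add hb

lemma smul (hD : IsUpperSet D) (hx : SupportedIn 𝒜 D x) (r : Smash 𝒜) :
    SupportedIn 𝒜 D (r • x) := by
  induction r using induction generalizing x with
  | of a => exact hx.of_smul hD a
  | e l => exact hx.e_smul l
  | add r s hr hs => simpa only [add_smul] using (hr hx).add (hs hx)
  | mul r s hr hs => simpa only [mul_smul] using hr (hs hx)

end SupportedIn

namespace HasDegreesIn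

variable {D : Set ℤ}

lemma of_injective (hY : HasDegreesIn 𝒜 D Y) (f : X →ₗ[Smash 𝒜] Y) (hf : Function.Injective f) :
    HasDegreesIn 𝒜 D X := fun x =>
  let ⟨S, hS, hx⟩ := hY (f x)
  ⟨S, hS, hf (by simpa only [map_sum, map_smul] using hx)⟩

lemma of_surjective (hX : HasDegreesIn 𝒜 D X) (f : X →ₗ[Smash 𝒜] Y)
    (hf : Function.Surjective f) : HasDegreesIn 𝒜 D Y := fun y => by
  obtain ⟨x, rfl⟩ := hf y
  obtain ⟨S, hS, hx⟩ := hX x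
  exact ⟨S, hS, by simp only [← map_smul, ← map_sum, hx]⟩

lemma e_smul_eq_zero (hX : HasDegreesIn 𝒜 D X) {k : ℤ} (hk : k ∉ D) (x : X) :
    (e k : Smash 𝒜) • x = 0 :=
  let ⟨_, hS, hx⟩ := hX x
  e_smul_eq_zero_of_sum_eq hx fun h => hk (hS h)

lemma eq_zero_of_disjoint (hX : HasDegreesIn 𝒜 D X) {D' : Set ℤ} (hY : HasDegreesIn 𝒜 D' Y)
    (h : Disjoint D D') (f : X →ₗ[Smash 𝒜] Y) : f = 0 := by
  ext x
  obtain ⟨S, hS, hx⟩ := hX x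
  rw [← hx, map_sum]
  exact Finset.sum_eq_zero fun k hk => by
    rw [map_smul, hY.e_smul_eq_zero (h.notMem_of_mem_left (hS hk))]

lemma e_smul_eq_self {u : ℤ} (hX : HasDegreesIn 𝒜 {u} X) (x : X) : (e u : Smash 𝒜) • x = x := by
  obtain ⟨S, hS, hx⟩ := hX x
  simpa using sum_e_smul_eq_of_subset hx (S' := {u}) (by exact_mod_cast hS)

lemma finsupp (hX : HasDegreesIn 𝒜 D X) (I : Type*) : HasDegreesIn 𝒜 D (I →₀ X) := fun f => by
  classical
  choose S hS hx using hX
  refine ⟨f.support.biUnion fun i => S (f i), by simp [hS], Finsupp.ext fun i => ?_⟩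
  rw [Finsupp.finsetSum_apply]
  by_cases hi : i ∈ f.support
  · exact sum_e_smul_eq_of_subset (hx (f i)) (Finset.subset_biUnion_of_mem (fun i => S (f i)) hi)
  · simp [Finsupp.notMem_support_iff.1 hi]

lemma of_span_eq_top (hD : IsUpperSet D) {s : Set X} (hs : Submodule.span (Smash 𝒜) s = ⊤)
    (h : ∀ x ∈ s, SupportedIn 𝒜 D x) : HasDegreesIn 𝒜 D X := fun x => by
  have hx : x ∈ Submodule.span (Smash 𝒜) s := hs ▸ Submodule.mem_top
  induction hx using Submodule.span_induction with
  | mem x hx => exact h x hx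
  | zero => exact .zero
  | add x y _ _ hx hy => exact hx.add hy
  | smul r x _ hx => exact hx.smul hD r

end HasDegreesIn

lemma HasDegreesIn.finite_support {D : Set ℤ} (hX : HasDegreesIn 𝒜 D X) (σ : X →+ Y) (x : X) :
    (Function.support fun k => (e k : Smash 𝒜) • σ ((e k : Smash 𝒜) • x)).Finite := by
  obtain ⟨S, -, hx⟩ := hX x
  refine S.finite_toSet.subset fun k hk => by_contra fun h => hk ?_
  simp only [e_smul_eq_zero_of_sum_eq hx h, map_zero, smul_zero]

/-- The degree-preserving part of a map `σ` that commutes with the action of `A`. -/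
def HasDegreesIn.degreeZeroPart {D : Set ℤ} (hX : HasDegreesIn 𝒜 D X) (σ : X →+ Y)
    (hσ : ∀ (a : 𝒜.A) (x : X), σ (of a • x) = of a • σ x) : X →ₗ[Smash 𝒜] Y :=
  linearMapMk
    { toFun x := ∑ᶠ k, (e k : Smash 𝒜) • σ ((e k : Smash 𝒜) • x)
      map_zero' := by simp
      map_add' x y := by
        simp only [smul_add, map_add]
        exact finsum_add_distrib (hX.finite_support σ x) (hX.finite_support σ y) }
    (fun i a ha x => by
      change ∑ᶠ k, _ = of a • ∑ᶠ k, _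
      rw [smul_finsum' _ (hX.finite_support σ x)]
      simp only [e_smul_of_smul ha, hσ]
      exact finsum_comp_equiv (Equiv.subRight (i : ℤ))
        (f := fun k => of a • (e k : Smash 𝒜) • σ ((e k : Smash 𝒜) • x)))
    (fun l x => by
      change ∑ᶠ k, _ = (e l : Smash 𝒜) • ∑ᶠ k, _
      rw [smul_finsum' _ (hX.finite_support σ x)]
      refine finsum_congr fun k => ?_
      obtain rfl | h := eq_or_ne k l
      · simp only [e_smul_e_smul]
      · rw [e_smul_e_smul_of_ne h, e_smul_e_smul_of_ne h.symm, map_zero, smul_zero])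

lemma HasDegreesIn.apply_degreeZeroPart {D : Set ℤ} (hX : HasDegreesIn 𝒜 D X) (σ : X →+ Y)
    (hσ : ∀ (a : 𝒜.A) (x : X), σ (of a • x) = of a • σ x) (f : Y →ₗ[Smash 𝒜] X)
    (hf : ∀ x, f (σ x) = x) (x : X) : f (hX.degreeZeroPart σ hσ x) = x := by
  obtain ⟨S, -, hx⟩ := hX x
  have hS : (Function.support fun k => (e k : Smash 𝒜) • σ ((e k : Smash 𝒜) • x)) ⊆ ↑S :=
    fun k hk => by_contra fun h => hk (by
      simp only [e_smul_eq_zero_of_sum_eq hx h, map_zero, smul_zero])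
  change f (∑ᶠ k, _) = x
  rw [finsum_eq_sum_of_support_subset _ hS]
  simp only [map_sum, map_smul, hf, e_smul_e_smul, hx]

universe u in
lemma HasDegreesIn.exists_projective {X : Type u} [AddCommGroup X] [Module (Smash 𝒜) X]
    {D : Set ℤ} (hD : IsUpperSet D) (hX : HasDegreesIn 𝒜 D X) :
    ∃ (Q : ModuleCat.{u} (Smash 𝒜)) (f : Q →ₗ[Smash 𝒜] X),
      Module.Projective (Smash 𝒜) Q ∧ HasDegreesIn 𝒜 D Q ∧ Function.Surjective f := by
  -- `Q` is a direct sum of modules `Smash 𝒜 * e k`.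
  let gen (p : D × X) : D × X →₀ Smash 𝒜 := Finsupp.single p (e p.1)
  let Q : Submodule (Smash 𝒜) (D × X →₀ Smash 𝒜) := Submodule.span _ (Set.range gen)
  have hgen (p : D × X) : (e p.1 : Smash 𝒜) • gen p = gen p := by
    rw [Finsupp.smul_single, smul_eq_mul, e_mul_self]
  let L := Finsupp.linearCombination (Smash 𝒜) gen
  have hL (z : Q) : L z = z := by
    refine LinearMap.eqOn_span (f := L) (g := LinearMap.id) ?_ z.2
    rintro _ ⟨p, rfl⟩
    exact (Finsupp.linearCombination_single _ _ _).trans (hgen p)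
  have hLQ (z : D × X →₀ Smash 𝒜) : L z ∈ Q :=
    (Finsupp.range_linearCombination (Smash 𝒜) (v := gen)).le ⟨z, rfl⟩
  have hQ : Module.Projective (Smash 𝒜) Q :=
    .of_split Q.subtype (L.codRestrict Q hLQ) (LinearMap.ext fun z => Subtype.ext (hL z))
  refine ⟨.of _ Q, Finsupp.linearCombination (Smash 𝒜) Prod.snd ∘ₗ Q.subtype, hQ,
    .of_span_eq_top hD (Submodule.span_span_coe_preimage (s := Set.range gen)) ?_, fun x => ?_⟩
  · rintro ⟨_, _⟩ ⟨p, rfl⟩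
    exact .of_e_smul_eq p.1.2 (Subtype.ext (hgen p))
  · obtain ⟨S, hS, hx⟩ := hX x
    refine ⟨∑ k : S, ⟨gen (⟨k, hS k.2⟩, x), Submodule.subset_span ⟨_, rfl⟩⟩, ?_⟩
    simp only [map_sum, LinearMap.comp_apply, Submodule.subtype_apply, gen,
      Finsupp.linearCombination_single]
    exact (Finset.sum_coe_sort S fun k => (e k : Smash 𝒜) • x).trans hx

section ConcentratedInOneDegree

variable {u : ℤ}

lemma HasDegreesIn.of_smul_eq_zero_of_pos (hX : HasDegreesIn 𝒜 {u} X) {i : ℕ} (hi : 0 < i)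
    {a : 𝒜.A} (ha : a ∈ 𝒜.grading i) (x : X) : of a • x = 0 := by
  rw [← hX.e_smul_eq_self (of a • x), e_smul_of_smul ha, hX.e_smul_eq_zero (by simp [hi.ne']),
    smul_zero]

lemma HasDegreesIn.of_smul_eq_zero_of_mem_jideal (hX : HasDegreesIn 𝒜 {u} X) {a : 𝒜.A}
    (ha : a ∈ 𝒜.jideal) (x : X) : of a • x = 0 := by
  let f : 𝒜.A →+ X :=
    ((smulAddHom (Smash 𝒜) X).flip x).comp (AddMonoidHomClass.toAddMonoidHom of)
  have hf : 𝒜.jideal.toAddSubmonoid ≤ AddMonoidHom.mker f :=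
    (HomogeneousIdeal.irrelevant_eq_iSup 𝒜.grading).trans_le
      (iSup₂_le fun i hi a ha => hX.of_smul_eq_zero_of_pos hi ha x)
  exact hf ha

/-- Between modules concentrated in one degree only the action of `A_0` matters. -/
def HasDegreesIn.linearMapMk (hX : HasDegreesIn 𝒜 {u} X) (hY : HasDegreesIn 𝒜 {u} Y) (f : X →+ Y)
    (hf : ∀ a ∈ 𝒜.grading 0, ∀ x, f (of a • x) = of a • f x) : X →ₗ[Smash 𝒜] Y :=
  Smash.linearMapMk f
    (fun i a ha x => by
      obtain rfl | hi := i.eq_zero_or_pos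
      · exact hf a ha x
      · rw [hX.of_smul_eq_zero_of_pos hi ha, hY.of_smul_eq_zero_of_pos hi ha, map_zero])
    (fun k x => by
      obtain rfl | h := eq_or_ne k u
      · rw [hX.e_smul_eq_self, hY.e_smul_eq_self]
      · rw [hX.e_smul_eq_zero h, hY.e_smul_eq_zero h, map_zero])

lemma HasDegreesIn.exists_rightInverse [IsSemisimpleRing (𝒜.grading 0)]
    (hX : HasDegreesIn 𝒜 {u} X) (hY : HasDegreesIn 𝒜 {u} Y) (π : X →ₗ[Smash 𝒜] Y)
    (hπ : Function.Surjective π) : ∃ σ : Y →ₗ[Smash 𝒜] X, π ∘ₗ σ = LinearMap.id := by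
  let ρ : 𝒜.grading 0 →+* Smash 𝒜 :=
    of.toRingHom.comp (SetLike.GradeZero.subring 𝒜.grading).subtype
  let := Module.compHom X ρ
  let := Module.compHom Y ρ
  let π' : X →ₗ[𝒜.grading 0] Y :=
    { toFun := π, map_add' := map_add π, map_smul' a x := map_smul π (ρ a) x }
  have := Module.projective_of_isSemisimpleRing (𝒜.grading 0) Y
  obtain ⟨σ, hσ⟩ := Module.projective_lifting_property π' LinearMap.id hπ
  exact ⟨hY.linearMapMk hX σ.toAddMonoidHom fun a ha x => map_smul σ (⟨a, ha⟩ : 𝒜.grading 0) x,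
    LinearMap.ext fun y => LinearMap.congr_fun hσ y⟩

end ConcentratedInOneDegree

end Smash

/-! ### Graded modules as modules over the smash product -/

open Smash

namespace GMod

variable (M : 𝒜.GMod)

instance : Decomposition M.grading :=
  (isInternal_submodule_of_iSupIndep_of_iSup_eq_top M.indep M.sup_eq_top).chooseDecomposition _

/-- The projection of a graded module to its component of degree `k`. -/
def proj (k : ℤ) : Module.End F M.M :=
  (M.grading k).subtype ∘ₗ component F ℤ _ k ∘ₗ (decomposeLinearEquiv M.grading).toLinearMap

variable {M}

lemma proj_mem (k : ℤ) (x : M.M) : M.proj k x ∈ M.grading k := SetLike.coe_mem _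

lemma proj_of_mem {k : ℤ} {x : M.M} (hx : x ∈ M.grading k) : M.proj k x = x :=
  decompose_of_mem_same _ hx

lemma proj_of_mem_of_ne {k l : ℤ} {x : M.M} (hx : x ∈ M.grading k) (h : k ≠ l) :
    M.proj l x = 0 :=
  decompose_of_mem_ne _ hx h

lemma proj_smul {i : ℕ} {a : 𝒜.A} (ha : a ∈ 𝒜.grading i) (k : ℤ) (x : M.M) :
    M.proj (i + k) (a • x) = a • M.proj k x := by
  induction x using Decomposition.inductionOn M.grading with
  | zero => simp
  | @homogeneous l x =>
    obtain rfl | h := eq_or_ne l k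
    · rw [proj_of_mem x.2, proj_of_mem (M.smul_mem ha x.2)]
    · rw [proj_of_mem_of_ne x.2 h, proj_of_mem_of_ne (M.smul_mem ha x.2) (by simpa), smul_zero]
  | add x y hx hy => simp only [smul_add, map_add, hx, hy]

variable (M) in
/-- The action of the smash product on a graded module. -/
def smashAction : Smash 𝒜 →ₐ[F] Module.End F M.M :=
  lift (FreeAlgebra.lift F (Sum.elim (Algebra.lsmul F F M.M) M.proj)) (by
    rintro _ _ (_ | _ | _ | _ | h | ⟨ha, k⟩) <;> ext x <;>
      simp only [map_add, map_mul, map_zero, FreeAlgebra.lift_ι_apply, Sum.elim_inl, Sum.elim_inr,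
        AlgHom.commutes, Module.End.mul_apply, Algebra.lsmul_apply]
    · exact proj_of_mem (proj_mem _ _)
    · exact proj_of_mem_of_ne (proj_mem _ _) h.symm
    · exact proj_smul ha k x)

instance : Module (Smash 𝒜) M.M := Module.compHom M.M (smashAction M).toRingHom

lemma of_smul (a : 𝒜.A) (x : M.M) : of a • x = a • x := by
  change smashAction M (Smash.mk _) x = _
  rw [smashAction, lift_mk, FreeAlgebra.lift_ι_apply]
  rfl

lemma e_smul (k : ℤ) (x : M.M) : (e k : Smash 𝒜) • x = M.proj k x := by
  change smashAction M (Smash.mk _) x = _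
  rw [smashAction, lift_mk, FreeAlgebra.lift_ι_apply]
  rfl

lemma e_smul_eq_self_iff {k : ℤ} {x : M.M} : (e k : Smash 𝒜) • x = x ↔ x ∈ M.grading k :=
  ⟨fun h => h ▸ e_smul k x ▸ proj_mem k x, fun h => (e_smul k x).trans (proj_of_mem h)⟩

lemma hasDegreesIn {D : Set ℤ} (h : ∀ k ∉ D, M.grading k = ⊥) : HasDegreesIn 𝒜 D M.M :=
  fun x => by
  induction x using Decomposition.inductionOn M.grading with
  | zero => exact .zero
  | @homogeneous k x =>
    by_cases hk : k ∈ D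
    · exact .of_e_smul_eq hk (e_smul_eq_self_iff.2 x.2)
    · rw [(Submodule.mem_bot F).1 (h k hk ▸ x.2 : (x : M.M) ∈ (⊥ : Submodule F M.M))]
      exact .zero
  | add x y hx hy => exact hx.add hy

lemma span_smash_eq_top {s : Set M.M} (hs : Submodule.span 𝒜.A s = ⊤) :
    Submodule.span (Smash 𝒜) s = ⊤ := by
  refine eq_top_iff.2 fun x _ => ?_
  have hx : x ∈ Submodule.span 𝒜.A s := hs ▸ Submodule.mem_top
  induction hx using Submodule.span_induction with
  | mem x hx => exact Submodule.subset_span hx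
  | zero => exact zero_mem _
  | add x y _ _ hx hy => exact add_mem (hx trivial) (hy trivial)
  | smul a x _ hx => exact of_smul a x ▸ Submodule.smul_mem _ _ (hx trivial)

lemma GenInDeg.hasDegreesIn {s : ℤ} (hM : M.GenInDeg s) : HasDegreesIn 𝒜 (Set.Ici s) M.M :=
  .of_span_eq_top (isUpperSet_Ici s) (span_smash_eq_top hM)
    fun _ hx => .of_e_smul_eq Set.self_mem_Ici (e_smul_eq_self_iff.2 hx)

instance [Module.Finite 𝒜.A M.M] : Module.Finite (Smash 𝒜) M.M :=
  have ⟨s, hs⟩ := Module.Finite.fg_top (R := 𝒜.A) (M := M.M)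
  ⟨s, span_smash_eq_top hs⟩

instance [Module.Projective 𝒜.A M.M] : Module.Projective (Smash 𝒜) M.M := by
  refine .of_lifting_property'' fun f hf => ?_
  let := Module.compHom (M.M →₀ Smash 𝒜) (of (𝒜 := 𝒜)).toRingHom
  let f' : (M.M →₀ Smash 𝒜) →ₗ[𝒜.A] M.M :=
    { toFun := f
      map_add' := map_add f
      map_smul' a z := (map_smul f (of a) z).trans (of_smul a _) }
  obtain ⟨σ, hσ⟩ := Module.projective_lifting_property f' LinearMap.id hf
  have hM : HasDegreesIn 𝒜 Set.univ M.M := hasDegreesIn fun k hk => (hk trivial).elim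
  have hσ' (a : 𝒜.A) (x : M.M) : σ (of a • x) = of a • σ x :=
    (congrArg σ (of_smul a x)).trans (map_smul σ a x)
  exact ⟨hM.degreeZeroPart σ.toAddMonoidHom hσ', LinearMap.ext fun x =>
    hM.apply_degreeZeroPart σ.toAddMonoidHom hσ' f (LinearMap.congr_fun hσ) x⟩

variable (M) in
/-- The graded module `M` with degrees raised by `u`. -/
def shift (u : ℤ) : 𝒜.GMod where
  M := M.M
  grading k := M.grading (k - u)
  sup_eq_top := ((Equiv.subRight u).iSup_comp (g := M.grading)).trans M.sup_eq_top
  indep := M.indep.comp (Equiv.subRight u).injective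
  smul_mem {i k a x} ha hx := by rw [add_sub_assoc]; exact M.smul_mem ha hx

lemma GenInDeg.shift {s : ℤ} (hM : M.GenInDeg s) (u : ℤ) : (M.shift u).GenInDeg (s + u) := by
  change Submodule.span 𝒜.A (M.grading (s + u - u) : Set M.M) = ⊤
  rwa [add_sub_cancel_right]

lemma hasDegreesIn_shift {M : 𝒜.GMod} {s : ℤ} (hM : ∀ k, k ≠ s → M.grading k = ⊥) (u : ℤ) :
    HasDegreesIn 𝒜 {s + u} (M.shift u).M :=
  hasDegreesIn fun k hk => hM (k - u) fun h => hk (by simp [← h])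

/-- A map that commutes with the action of `A` and preserves the degrees of generators. -/
def linearMapMk {M : 𝒜.GMod} {Y : Type*} [AddCommGroup Y] [Module (Smash 𝒜) Y] (f : M.M →+ Y)
    (map_of : ∀ (a : 𝒜.A) x, f (a • x) = of a • f x) {s : ℤ} (hM : M.GenInDeg s)
    (hf : ∀ x ∈ M.grading s, (e s : Smash 𝒜) • f x = f x) : M.M →ₗ[Smash 𝒜] Y :=
  Smash.linearMapMk f (fun i a _ x => by rw [of_smul, map_of]) fun k x => by
    have hx : x ∈ Submodule.span 𝒜.A (M.grading s : Set M.M) := Submodule.eq_top_iff'.1 hM x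
    induction hx using Submodule.span_induction generalizing k with
    | mem x hx =>
      obtain rfl | h := eq_or_ne k s
      · rw [e_smul_eq_self_iff.2 hx, hf x hx]
      · rw [e_smul, proj_of_mem_of_ne hx h.symm, ← hf x hx, e_smul_e_smul_of_ne h, map_zero]
    | zero => simp only [smul_zero, map_zero]
    | add x y _ _ hx hy => simp only [smul_add, map_add, hx, hy]
    | smul a x _ hx =>
      induction a using induction_of_homogeneous with
      | zero => simp only [zero_smul, smul_zero, map_zero]
      | homogeneous i a ha =>
        rw [← of_smul a x, e_smul_of_smul ha, of_smul, map_of, hx, of_smul a x, map_of,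
          e_smul_of_smul ha]
      | add a b ha hb => simp only [add_smul, smul_add, map_add, ha, hb]

end GMod

namespace GHom

variable {M N : 𝒜.GMod}

/-- A morphism of graded modules, as a morphism of modules over the smash product. -/
def toSmash (f : GHom M N) : M.M →ₗ[Smash 𝒜] N.M :=
  linearMapMk f.lin.toAddMonoidHom
    (fun i a _ x => by simp [GMod.of_smul])
    (fun k x => by
      change f.lin _ = e k • f.lin x
      induction x using Decomposition.inductionOn M.grading with
      | zero => simp
      | @homogeneous l x =>
        obtain rfl | h := eq_or_ne l k
        · rw [GMod.e_smul_eq_self_iff.2 x.2, GMod.e_smul_eq_self_iff.2 (f.grad _ _ x.2)]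
        · rw [GMod.e_smul, GMod.proj_of_mem_of_ne x.2 h, GMod.e_smul,
            GMod.proj_of_mem_of_ne (f.grad _ _ x.2) h, map_zero]
      | add x y hx hy => simp only [smul_add, map_add, hx, hy])

/-- A morphism of graded modules, as a morphism of shifts. -/
def shift (f : GHom M N) (u : ℤ) : GHom (M.shift u) (N.shift u) where
  lin := f.lin
  grad k := f.grad (k - u)

end GHom

variable {T : 𝒜.GMod}

lemma IsTrivialGMod.exists_linearMap (hT : IsTrivialGMod T) (u : ℤ) :
    ∃ t : (T.shift u).M, ∀ {X : Type*} [AddCommGroup X] [Module (Smash 𝒜) X],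
      HasDegreesIn 𝒜 {u} X → ∀ x : X, ∃ f : (T.shift u).M →ₗ[Smash 𝒜] X, f t = x := by
  obtain ⟨hT₀, ⟨ε⟩⟩ := hT
  refine ⟨ε.symm (Submodule.Quotient.mk 1), fun {X} _ _ hX x => ?_⟩
  let := Module.compHom X (of (𝒜 := 𝒜)).toRingHom
  let f : T.M →ₗ[𝒜.A] X := Submodule.liftQ 𝒜.jideal (LinearMap.toSpanSingleton 𝒜.A X x)
    (fun a ha => hX.of_smul_eq_zero_of_mem_jideal ha x) ∘ₗ ε.toLinearMap
  have hTu : HasDegreesIn 𝒜 {u} (T.shift u).M := by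
    simpa using GMod.hasDegreesIn_shift hT₀ u
  refine ⟨hTu.linearMapMk hX f.toAddMonoidHom fun a _ y => ?_, ?_⟩
  · exact (congrArg f (GMod.of_smul (M := T.shift u) a y)).trans (map_smul f a y)
  · change f _ = x
    rw [LinearMap.comp_apply, LinearEquiv.coe_coe, LinearEquiv.apply_symm_apply]
    exact one_smul 𝒜.A x

lemma IsTrivialGMod.exists_retract [IsSemisimpleRing (𝒜.grading 0)]
    (hT : IsTrivialGMod T) {u : ℤ} {X : Type*} [AddCommGroup X] [Module (Smash 𝒜) X]
    (hX : HasDegreesIn 𝒜 {u} X) :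
    ∃ (σ : X →ₗ[Smash 𝒜] (X →₀ (T.shift u).M)) (π : (X →₀ (T.shift u).M) →ₗ[Smash 𝒜] X),
      π ∘ₗ σ = LinearMap.id := by
  obtain ⟨t, ht⟩ := hT.exists_linearMap u
  choose f hf using ht hX
  have hTu : HasDegreesIn 𝒜 {u} (T.shift u).M := by
    simpa using GMod.hasDegreesIn_shift hT.1 u
  have hπ : Function.Surjective (Finsupp.lsum ℕ f) := fun x => ⟨.single x t, by
    rw [Finsupp.lsum_single, hf]⟩
  obtain ⟨σ, hσ⟩ := (hTu.finsupp X).exists_rightInverse hX _ hπ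
  exact ⟨σ, _, hσ⟩

end Graded

/-! ### Resolutions and extensions -/

open CategoryTheory Abelian Smash

section Resolution

/-- An exact augmented complex of projective objects as a projective resolution. -/
def resolutionOfExact {C : Type*} [Category C] [Abelian C] (K : ChainComplex C ℕ)
    [∀ n, Projective (K.X n)] {Z : C} (ε : K.X 0 ⟶ Z) [Epi ε] (w : K.d 1 0 ≫ ε = 0)
    (hε : (ShortComplex.mk (K.d 1 0) ε w).Exact) (hK : ∀ n, K.ExactAt (n + 1)) :
    ProjectiveResolution Z where
  complex := K
  π := (ChainComplex.toSingle₀Equiv K Z).symm ⟨ε, w⟩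
  quasiIso := ⟨fun n => by
    cases n with
    | zero =>
      rw [ChainComplex.quasiIsoAt₀_iff, ShortComplex.quasiIso_iff_of_zeros' _
        (K.shape _ _ (by simp)) rfl rfl]
      refine (ShortComplex.exact_and_epi_g_iff_of_iso ?_).2 ⟨hε, ‹Epi ε›⟩
      exact ShortComplex.isoMk (Iso.refl _) (Iso.refl _) (Iso.refl _)
        ((Category.id_comp _).trans (Category.comp_id _).symm)
        ((Category.id_comp _).trans
          ((ChainComplex.toSingle₀Equiv_symm_apply_f_zero ε w).symm.trans
            (Category.comp_id _).symm))
    | succ n =>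
      rw [quasiIsoAt_iff_exactAt' _ _ (ChainComplex.exactAt_succ_single_obj _ _)]
      exact hK n⟩

variable {R : Type} [Ring R] {X : ℕ → Type} [∀ n, AddCommGroup (X n)] [∀ n, Module R (X n)]
  {N : Type} [AddCommGroup N] [Module R N]
  (d : ∀ n, X (n + 1) →ₗ[R] X n) (ε : X 0 →ₗ[R] N)
  (hd : ∀ n, Function.Exact (d (n + 1)) (d n)) (hε : Function.Exact (d 0) ε)
  (hε' : Function.Surjective ε)

/-- The chain complex of modules with terms `X n` and differentials `d n`. -/
def moduleComplex : ChainComplex (ModuleCat.{0} R) ℕ :=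
  ChainComplex.of (fun n => ModuleCat.of R (X n)) (fun n => ModuleCat.ofHom (d n)) fun n => by
    rw [← ModuleCat.ofHom_comp, (hd n).linearMap_comp_eq_zero]; rfl

lemma moduleComplex_d (n : ℕ) : (moduleComplex d hd).d (n + 1) n = ModuleCat.ofHom (d n) :=
  ChainComplex.of_d (fun n => ModuleCat.of R (X n)) (d := fun n => ModuleCat.ofHom (d n)) n

lemma moduleComplex_exactAt (n : ℕ) : (moduleComplex d hd).ExactAt (n + 1) := by
  rw [HomologicalComplex.exactAt_iff' _ (n + 2) (n + 1) n (by simp) (by simp),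
    ShortComplex.ShortExact.moduleCat_exact_iff_function_exact]
  change Function.Exact ((moduleComplex d hd).d (n + 1 + 1) (n + 1)).hom
    ((moduleComplex d hd).d (n + 1) n).hom
  rw [moduleComplex_d, moduleComplex_d]
  exact hd n

variable [∀ n, Module.Projective R (X n)]

instance (n : ℕ) : Projective ((moduleComplex d hd).X n) :=
  (IsProjective.iff_projective (R := R) (X n)).1 inferInstance

/-- An exact sequence of projective modules as a projective resolution. -/
def moduleResolution : ProjectiveResolution (ModuleCat.of R N) :=
  let π : (moduleComplex d hd).X 0 ⟶ ModuleCat.of R N := ModuleCat.ofHom ε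
  have : Epi π := (ModuleCat.epi_iff_surjective _).2 hε'
  have w : (moduleComplex d hd).d 1 0 ≫ π = 0 := by
    rw [moduleComplex_d]
    exact ModuleCat.hom_ext hε.linearMap_comp_eq_zero
  resolutionOfExact (moduleComplex d hd) π w (by
    rw [ShortComplex.ShortExact.moduleCat_exact_iff_function_exact]
    change Function.Exact ((moduleComplex d hd).d 1 0).hom ε
    rwa [moduleComplex_d]) (moduleComplex_exactAt d hd)

end Resolution

lemma exact_mapRange_finsupp {R M N P : Type*} [Semiring R] [AddCommMonoid M] [AddCommMonoid N]
    [AddCommMonoid P] [Module R M] [Module R N] [Module R P] {f : M →ₗ[R] N} {g : N →ₗ[R] P}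
    (h : Function.Exact f g) (I : Type*) :
    Function.Exact (Finsupp.mapRange.linearMap (α := I) f)
      (Finsupp.mapRange.linearMap (α := I) g) := fun y => by
  refine Iff.trans ?_ (Set.ext_iff.1 (Finsupp.range_mapRange f f.map_zero) y).symm
  simp only [Finsupp.mapRange.linearMap_apply, Finsupp.ext_iff, Finsupp.mapRange_apply,
    Finsupp.zero_apply, h _, Set.mem_ofPred_eq]

lemma projective_finsupp (R P : Type*) [Semiring R] [AddCommMonoid P] [Module R P]
    [Module.Projective R P] (I : Type*) : Module.Projective R (I →₀ P) := by
  classical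
  exact .of_equiv (finsuppLequivDFinsupp R).symm

namespace MinRes

variable {M : 𝒜.GMod} (R : MinRes M)

/-- The minimal resolution `R` with all degrees raised by `u`. -/
def shift (u : ℤ) : MinRes (M.shift u) where
  P n := (R.P n).shift u
  d n := (R.d n).shift u
  aug := R.aug.shift u
  fg := R.fg
  projective := R.projective
  aug_surj := R.aug_surj
  exact_aug := R.exact_aug
  exact := R.exact
  minimal := R.minimal

lemma exact_d (n : ℕ) : Function.Exact (R.d (n + 1)).toSmash (R.d n).toSmash :=
  fun x => (SetLike.ext_iff.1 (R.exact n) x).symm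

lemma exact_d_aug : Function.Exact (R.d 0).toSmash R.aug.toSmash :=
  fun x => (SetLike.ext_iff.1 R.exact_aug x).symm

lemma projective_smash (n : ℕ) : Module.Projective (Smash 𝒜) (R.P n).M :=
  have := R.projective n
  inferInstance

/-- The direct sum of copies of `R`, as a projective resolution over the smash product. -/
def finsuppResolution (I : Type) :
    ProjectiveResolution (ModuleCat.of (Smash 𝒜) (I →₀ M.M)) :=
  have (n : ℕ) : Module.Projective (Smash 𝒜) (I →₀ (R.P n).M) :=
    have := R.projective_smash n
    projective_finsupp _ _ I
  moduleResolution (X := fun n => I →₀ (R.P n).M) (N := I →₀ M.M)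
    (fun n => Finsupp.mapRange.linearMap (R.d n).toSmash)
    (Finsupp.mapRange.linearMap R.aug.toSmash)
    (fun n => exact_mapRange_finsupp (R.exact_d n) I)
    (exact_mapRange_finsupp R.exact_d_aug I)
    (Finsupp.mapRange_surjective R.aug.toSmash (map_zero _) R.aug_surj)

variable {R} in
lemma ext_eq_zero_of_genInDeg {i : ℕ} {a : ℤ} (hR : (R.P i).GenInDeg a) (ha : 0 < a) {I : Type}
    {Y : Type} [AddCommGroup Y] [Module (Smash 𝒜) Y] (hY : HasDegreesIn 𝒜 {0} Y)
    (α : Ext (ModuleCat.of (Smash 𝒜) (I →₀ M.M)) (ModuleCat.of (Smash 𝒜) Y) i) : α = 0 := by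
  obtain ⟨f, hf, rfl⟩ := (R.finsuppResolution I).extMk_surjective α (i + 1) rfl
  obtain rfl : f = 0 := ModuleCat.hom_ext
    ((hR.hasDegreesIn.finsupp I).eq_zero_of_disjoint hY (by simpa using ha) f.hom)
  exact ProjectiveResolution.extMk_zero ..

end MinRes

namespace Smash.HasDegreesIn

variable {Y : Type} [AddCommGroup Y] [Module (Smash 𝒜) Y]

theorem ext_eq_zero {X : Type} [AddCommGroup X] [Module (Smash 𝒜) X] {s : ℤ} (hs : 0 < s)
    (hX : HasDegreesIn 𝒜 (Set.Ici s) X) (hY : HasDegreesIn 𝒜 {0} Y) (i : ℕ)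
    (α : Ext (ModuleCat.of (Smash 𝒜) X) (ModuleCat.of (Smash 𝒜) Y) i) : α = 0 := by
  have hdisj : Disjoint (Set.Ici s) {(0 : ℤ)} := by simpa using hs
  induction i generalizing X with
  | zero =>
    obtain ⟨f, rfl⟩ := (Ext.mk₀_bijective _ _).2 α
    rw [show f = 0 from ModuleCat.hom_ext (hX.eq_zero_of_disjoint hY hdisj f.hom), Ext.mk₀_zero]
  | succ i ih =>
    obtain ⟨Q, f, _, hQ, hf⟩ := hX.exists_projective (isUpperSet_Ici s)
    have : Projective f.shortComplexKer.X₂ := (IsProjective.iff_projective (R := Smash 𝒜) Q).1 ‹_›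
    have hses := LinearMap.shortExact_shortComplexKer hf
    obtain ⟨β, rfl⟩ := Ext.contravariant_sequence_exact₃ hses _ α
      (Ext.eq_zero_of_projective _) (add_comm 1 i)
    rw [ih (X := LinearMap.ker f) (hQ.of_injective (Submodule.subtype _) Subtype.val_injective) β,
      Ext.comp_zero]

lemma exists_submodule_Ici_succ {X : Type*} [AddCommGroup X] [Module (Smash 𝒜) X] {u : ℤ}
    (hX : HasDegreesIn 𝒜 (Set.Ici u) X) :
    ∃ N : Submodule (Smash 𝒜) X,
      HasDegreesIn 𝒜 {u} (X ⧸ N) ∧ HasDegreesIn 𝒜 (Set.Ici (u + 1)) N := by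
  let N : Submodule (Smash 𝒜) X := .span (Smash 𝒜) {x | ∃ k > u, (e k : Smash 𝒜) • x = x}
  refine ⟨N, fun z => ?_, ?_⟩
  · have hN (x : X) {k : ℤ} (hk : u < k) : (e k : Smash 𝒜) • N.mkQ x = 0 := by
      rw [← map_smul]
      exact (Submodule.Quotient.mk_eq_zero N).2 (Submodule.subset_span ⟨k, hk, e_smul_e_smul k x⟩)
    obtain ⟨x, rfl⟩ := N.mkQ_surjective z
    obtain ⟨S, hS, hx⟩ := hX.of_surjective N.mkQ N.mkQ_surjective (N.mkQ x)
    have hx := sum_e_smul_eq_of_subset hx (Finset.subset_insert u S)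
    rw [Finset.sum_eq_single_of_mem u (Finset.mem_insert_self u S) fun k hk hku =>
      hN x ((hS ((Finset.mem_insert.1 hk).resolve_left hku)).lt_of_ne' hku)] at hx
    exact .of_e_smul_eq rfl hx
  · exact .of_span_eq_top (isUpperSet_Ici _) Submodule.span_span_coe_preimage
      fun x ⟨_, hk, hx⟩ => .of_e_smul_eq (Set.mem_Ici.2 hk) (Subtype.ext hx)

theorem exists_ext_factor [IsSemisimpleRing (𝒜.grading 0)] {T : 𝒜.GMod} (hT : IsTrivialGMod T)
    {R : MinRes T} {i : ℕ} {a : ℤ} (hR : (R.P i).GenInDeg a) {X : Type} [AddCommGroup X]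
    [Module (Smash 𝒜) X] {u : ℤ} (hX : HasDegreesIn 𝒜 (Set.Ici u) X) (hY : HasDegreesIn 𝒜 {0} Y)
    (hu : 0 ≤ a + u) :
    ∃ (I : Type) (f : X →ₗ[Smash 𝒜] (I →₀ (T.shift u).M)),
      ∀ α : Ext (ModuleCat.of (Smash 𝒜) X) (ModuleCat.of (Smash 𝒜) Y) i,
      ∃ β, (Ext.mk₀ (ModuleCat.ofHom f)).comp β (zero_add i) = α := by
  obtain hu' | _ := lt_or_ge 0 u
  · exact ⟨PEmpty, 0, fun α => ⟨0, (Ext.comp_zero ..).trans (hX.ext_eq_zero hu' hY i α).symm⟩⟩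
  obtain ⟨N, hXN, hN⟩ := hX.exists_submodule_Ici_succ
  rw [← N.ker_mkQ] at hN
  have hNY (β : Ext (ModuleCat.of (Smash 𝒜) (LinearMap.ker N.mkQ)) (ModuleCat.of (Smash 𝒜) Y) i) :
      β = 0 := by
    obtain ⟨I, f, hf⟩ := exists_ext_factor hT hR hN hY (by omega)
    obtain ⟨γ, rfl⟩ := hf β
    rw [MinRes.ext_eq_zero_of_genInDeg (R := R.shift (u + 1)) (hR.shift (u + 1)) (by omega) hY γ,
      Ext.comp_zero]
  obtain ⟨σ, π, hσ⟩ := hT.exists_retract hXN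
  refine ⟨X ⧸ N, σ ∘ₗ N.mkQ, fun α => ?_⟩
  obtain ⟨β, rfl⟩ := Ext.contravariant_sequence_exact₂
    (LinearMap.shortExact_shortComplexKer N.mkQ_surjective) _ α (hNY _)
  refine ⟨(Ext.mk₀ (ModuleCat.ofHom π)).comp β (zero_add i), ?_⟩
  rw [Ext.mk₀_comp_mk₀_assoc, ← ModuleCat.ofHom_comp, ← LinearMap.comp_assoc, hσ,
    LinearMap.id_comp]
termination_by (1 - u).toNat

end Smash.HasDegreesIn

section Lift

lemma exists_lift_comp_eq {C : Type*} [Category C] [Abelian C] [HasExt C] {Z Z' Y : C}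
    (R : ProjectiveResolution Z) (R' : ProjectiveResolution Z')
    (hR : ∀ n (g : R.complex.X n ⟶ Y), R.complex.d (n + 1) n ≫ g = 0) {i : ℕ} {f : Z ⟶ Z'}
    (hf : ∀ α : Ext Z Y i, ∃ β : Ext Z' Y i, (Ext.mk₀ f).comp β (zero_add i) = α)
    (h : R.complex.X i ⟶ Y) :
    ∃ φ : R'.complex.X i ⟶ Y, (ProjectiveResolution.lift f R R').f i ≫ φ = h := by
  cases i with
  | zero =>
    obtain ⟨β, hβ⟩ := hf (Ext.mk₀ (R.exact₀.desc h (hR 0 h)))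
    obtain ⟨φ, rfl⟩ := (Ext.mk₀_bijective _ _).2 β
    rw [Ext.mk₀_comp_mk₀] at hβ
    let π : R.complex.X 0 ⟶ Z := R.π.f 0
    let π' : R'.complex.X 0 ⟶ Z' := R'.π.f 0
    have hπ : (ProjectiveResolution.lift f R R').f 0 ≫ π' = π ≫ f :=
      ProjectiveResolution.lift_commutes_zero f R R'
    have hdesc : π ≫ R.exact₀.desc h (hR 0 h) = h := R.exact₀.g_desc h (hR 0 h)
    refine ⟨π' ≫ φ, ?_⟩
    rw [← Category.assoc, hπ, Category.assoc, (Ext.mk₀_bijective _ _).1 hβ, hdesc]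
  | succ i =>
    obtain ⟨β, hβ⟩ := hf (R.extMk h (i + 2) rfl (hR _ h))
    obtain ⟨φ, hφ, rfl⟩ := R'.extMk_surjective β (i + 2) rfl
    let ψ : ProjectiveResolution.Hom R R' f :=
      { hom := ProjectiveResolution.lift f R R'
        hom_f_zero_comp_π_f_zero :=
          HomologicalComplex.congr_hom (ProjectiveResolution.lift_commutes f R R') 0 }
    rw [ProjectiveResolution.mk₀_comp_extMk φ (i + 2) rfl hφ ψ, ← sub_eq_zero,
      ProjectiveResolution.sub_extMk, ProjectiveResolution.extMk_eq_zero_iff (hp := rfl)] at hβ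
    obtain ⟨g, hg⟩ := hβ
    exact ⟨φ, sub_eq_zero.1 (hg.symm.trans (hR i g))⟩

variable {R : Type} [Ring R] {X : ℕ → Type} [∀ n, AddCommGroup (X n)] [∀ n, Module R (X n)]
  {N : Type} [AddCommGroup N] [Module R N]
  {d : ∀ n, X (n + 1) →ₗ[R] X n} {ε : X 0 →ₗ[R] N}
  {X' : ℕ → Type} [∀ n, AddCommGroup (X' n)] [∀ n, Module R (X' n)]
  {N' : Type} [AddCommGroup N'] [Module R N']
  {d' : ∀ n, X' (n + 1) →ₗ[R] X' n} {ε' : X' 0 →ₗ[R] N'}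
  [∀ n, Module.Projective R (X n)] [∀ n, Module.Projective R (X' n)]
  {Y : Type} [AddCommGroup Y] [Module R Y]

lemma exists_chainMap_comp_eq
    (hd : ∀ n, Function.Exact (d (n + 1)) (d n)) (hdε : Function.Exact (d 0) ε)
    (hε : Function.Surjective ε) (hd' : ∀ n, Function.Exact (d' (n + 1)) (d' n))
    (hdε' : Function.Exact (d' 0) ε') (hε' : Function.Surjective ε')
    (hY : ∀ n (g : X n →ₗ[R] Y), g ∘ₗ d n = 0) {i : ℕ} (f : N →ₗ[R] N')
    (hf : ∀ α : Ext (ModuleCat.of R N) (ModuleCat.of R Y) i,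
      ∃ β, (Ext.mk₀ (ModuleCat.ofHom f)).comp β (zero_add i) = α)
    (h : X i →ₗ[R] Y) :
    ∃ (ℓ : ∀ n, X n →ₗ[R] X' n) (φ : X' i →ₗ[R] Y),
      (∀ n, d' n ∘ₗ ℓ (n + 1) = ℓ n ∘ₗ d n) ∧ φ ∘ₗ ℓ i = h := by
  let P := moduleResolution d ε hd hdε hε
  let P' := moduleResolution d' ε' hd' hdε' hε'
  obtain ⟨φ, hφ⟩ := exists_lift_comp_eq P P' (Y := ModuleCat.of R Y) (fun n g =>
    (congrArg (· ≫ g) (moduleComplex_d d hd n)).trans (ModuleCat.hom_ext (hY n g.hom)))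
    hf (ModuleCat.ofHom h)
  let ℓ := ProjectiveResolution.lift (ModuleCat.ofHom f) P P'
  refine ⟨fun n => (ℓ.f n).hom, φ.hom, fun n => ?_, congrArg ModuleCat.Hom.hom hφ⟩
  have hℓ := ℓ.comm (n + 1) n
  rw [show P.complex.d (n + 1) n = _ from moduleComplex_d d hd n,
    show P'.complex.d (n + 1) n = _ from moduleComplex_d d' hd' n] at hℓ
  exact congrArg ModuleCat.Hom.hom hℓ

end Lift

/-! ### Yoneda products -/

instance {M N : 𝒜.GMod} : LinearMap.CompatibleSMul M.M N.M 𝒜.A (Smash 𝒜) where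
  map_smul f a x := by rw [← GMod.of_smul, map_smul, GMod.of_smul]

lemma Smash.HasDegreesIn.map_eq_zero_of_mem_jideal_smul {M : 𝒜.GMod} {Y : Type*} [AddCommGroup Y]
    [Module (Smash 𝒜) Y] {u : ℤ} (hY : HasDegreesIn 𝒜 {u} Y) (g : M.M →+ Y)
    (hg : ∀ (a : 𝒜.A) x, g (a • x) = of a • g x) {x : M.M}
    (hx : x ∈ 𝒜.jideal • (⊤ : Submodule 𝒜.A M.M)) : g x = 0 := by
  refine Submodule.smul_induction_on hx (fun a ha y _ => ?_) fun y z hy hz => ?_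
  · rw [hg, hY.of_smul_eq_zero_of_mem_jideal ha]
  · rw [map_add, hy, hz, add_zero]

namespace MinRes

variable {M T : 𝒜.GMod} (R : MinRes M)

lemma comp_toSmash_d_eq_zero {u : ℤ} {Y : Type*} [AddCommGroup Y] [Module (Smash 𝒜) Y]
    (hY : HasDegreesIn 𝒜 {u} Y) (n : ℕ) (g : (R.P n).M →ₗ[Smash 𝒜] Y) :
    g ∘ₗ (R.d n).toSmash = 0 :=
  LinearMap.ext fun x => hY.map_eq_zero_of_mem_jideal_smul g.toAddMonoidHom
    (fun a y => (congrArg g (GMod.of_smul a y)).symm.trans (map_smul g (of a) y))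
    (R.minimal n ⟨x, rfl⟩)

lemma mem_cocyc (hT : IsTrivialGMod T) (n : ℕ) (g : HomSp T R n) : g ∈ cocyc T R n :=
  have hT₀ : HasDegreesIn 𝒜 {0} T.M := GMod.hasDegreesIn hT.1
  LinearMap.ext fun x => hT₀.map_eq_zero_of_mem_jideal_smul g.toAddMonoidHom
    (fun a y => (map_smul g a y).trans (GMod.of_smul a _).symm) (R.minimal n ⟨x, rfl⟩)

theorem exists_chainMap_comp_eq [IsSemisimpleRing (𝒜.grading 0)] (hT : IsTrivialGMod T)
    {RT : MinRes T} {i j : ℕ} {a u : ℤ} (hRT : (RT.P i).GenInDeg a) (hR : (R.P j).GenInDeg u)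
    (hau : 0 ≤ a + u) {Y : Type} [AddCommGroup Y] [Module (Smash 𝒜) Y] (hY : HasDegreesIn 𝒜 {0} Y)
    (h : (R.P (j + i)).M →ₗ[Smash 𝒜] Y) :
    ∃ (I : Type) (ℓ : ∀ n, (R.P (j + n)).M →ₗ[Smash 𝒜] (I →₀ ((RT.shift u).P n).M))
      (φ : (I →₀ ((RT.shift u).P i).M) →ₗ[Smash 𝒜] Y),
      (∀ n, Finsupp.mapRange.linearMap ((RT.shift u).d n).toSmash ∘ₗ ℓ (n + 1) =
        ℓ n ∘ₗ (R.d (j + n)).toSmash) ∧ φ ∘ₗ ℓ i = h := by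
  let N := (R.P j).M ⧸ LinearMap.range (R.d j).toSmash
  let q : (R.P j).M →ₗ[Smash 𝒜] N := Submodule.mkQ _
  have hN : HasDegreesIn 𝒜 (Set.Ici u) N :=
    hR.hasDegreesIn.of_surjective q (Submodule.mkQ_surjective _)
  obtain ⟨I, f, hf⟩ := hN.exists_ext_factor hT hRT hY hau
  have (n : ℕ) : Module.Projective (Smash 𝒜) (R.P (j + n)).M := R.projective_smash _
  have (n : ℕ) : Module.Projective (Smash 𝒜) (I →₀ ((RT.shift u).P n).M) :=
    have := (RT.shift u).projective_smash n
    projective_finsupp _ _ I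
  exact ⟨I, GradedAlg.exists_chainMap_comp_eq (X := fun n => (R.P (j + n)).M)
    (X' := fun n => I →₀ ((RT.shift u).P n).M) (N := N)
    (fun n => R.exact_d (j + n)) (LinearMap.exact_map_mkQ_range _) (Submodule.mkQ_surjective _)
    (fun n => exact_mapRange_finsupp ((RT.shift u).exact_d n) I)
    (exact_mapRange_finsupp (RT.shift u).exact_d_aug I)
    (Finsupp.mapRange_surjective (RT.shift u).aug.toSmash (map_zero _) RT.aug_surj)
    (fun n => R.comp_toSmash_d_eq_zero hY (j + n)) f hf h⟩

end MinRes

/-- A map of complexes `P_{j+•} → P_•`, as a chain lifting of its composite with the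
augmentation. -/
def ChainLift.ofComm {M T : 𝒜.GMod} {RT : MinRes T} {RM : MinRes M} {j : ℕ}
    (ℓ : ∀ n, (RM.P (j + n)).M →ₗ[𝒜.A] (RT.P n).M)
    (hℓ : ∀ n, (RT.d n).lin ∘ₗ ℓ (n + 1) = ℓ n ∘ₗ (RM.d (j + n)).lin) :
    ChainLift T RT RM j (RT.aug.lin ∘ₗ ℓ 0) where
  ℓ m k h := h.trans (Nat.add_comm k j) ▸ ℓ k
  comm_aug := rfl
  comm k := by
    have comm (m : ℕ) (h : j + k = m) :
        (RT.d k).lin ∘ₗ ((congrArg (· + 1) h) ▸ ℓ (k + 1) : (RM.P (m + 1)).M →ₗ[𝒜.A] _) =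
          (h ▸ ℓ k : (RM.P m).M →ₗ[𝒜.A] _) ∘ₗ (RM.d m).lin := by
      subst h
      exact hℓ k
    exact comm (k + j) (Nat.add_comm j k)

lemma exists_support_subset {R M N I : Type*} [Semiring R] [AddCommMonoid M] [AddCommMonoid N]
    [Module R M] [Module R N] [Module.Finite R M] (f : M →ₗ[R] I →₀ N) :
    ∃ s : Finset I, ∀ x, (f x).support ⊆ s := by
  classical
  obtain ⟨S, hS⟩ := Module.Finite.fg_top (R := R) (M := M)
  refine ⟨S.biUnion fun x => (f x).support, fun x => ?_⟩
  have hx : x ∈ Submodule.span R (S : Set M) := hS ▸ Submodule.mem_top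
  induction hx using Submodule.span_induction with
  | mem x hx => exact Finset.subset_biUnion_of_mem (fun x => (f x).support) hx
  | zero => simp
  | add x y _ _ hx hy =>
    rw [map_add]
    exact Finsupp.support_add.trans (Finset.union_subset hx hy)
  | smul c x _ hx =>
    rw [map_smul]
    exact Finsupp.support_smul.trans hx

lemma exists_apply_eq_sum_single {R M N P I : Type*} [Semiring R] [AddCommMonoid M]
    [AddCommMonoid N] [AddCommMonoid P] [Module R M] [Module R N] [Module R P] [Module.Finite R M]
    (f : M →ₗ[R] I →₀ N) (g : (I →₀ N) →ₗ[R] P) :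
    ∃ s : Finset I, ∀ x, g (f x) = ∑ k ∈ s, g (.single k (f x k)) := by
  obtain ⟨s, hs⟩ := exists_support_subset f
  refine ⟨s, fun x => ?_⟩
  conv_lhs => rw [← Finsupp.sum_single (f x),
    Finsupp.sum_of_support_subset _ (hs x) _ fun k _ => Finsupp.single_zero k, map_sum]

variable {M T : 𝒜.GMod} {RT : MinRes T} {RM : MinRes M} {i j : ℕ} {a b : ℤ}

theorem exists_eq_sum_comp_chainLift [IsSemisimpleRing (𝒜.grading 0)] (hT : IsTrivialGMod T)
    (hRT : (RT.P i).GenInDeg a) (hj : (RM.P j).GenInDeg b) {m : ℕ} (hm : m = i + j)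
    (hRM : (RM.P m).GenInDeg (a + b)) (h : HomSp T RM m) :
    ∃ (I : Type) (s : Finset I) (f : I → HomSp T RT i) (g : I → HomSp T RM j)
      (L : ∀ k, ChainLift T RT RM j (g k)), h = ∑ k ∈ s, f k ∘ₗ (L k).ℓ m i hm := by
  obtain rfl : m = j + i := hm.trans (add_comm i j)
  let u := -(a + b)
  have hT₀ : HasDegreesIn 𝒜 {0} T.M := GMod.hasDegreesIn hT.1
  let h' : ((RM.shift u).P (j + i)).M →ₗ[Smash 𝒜] T.M := GMod.linearMapMk h.toAddMonoidHom
    (fun c x => (map_smul h c x).trans (GMod.of_smul c _).symm) (hRM.shift u)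
    fun x _ => by rw [add_neg_cancel, hT₀.e_smul_eq_self]
  obtain ⟨I, ℓ, φ, hℓ, hφ⟩ :=
    (RM.shift u).exists_chainMap_comp_eq hT hRT (hj.shift u) (by omega) hT₀ h'
  have := (RM.shift u).fg (j + i)
  obtain ⟨s, hs⟩ := exists_apply_eq_sum_single (ℓ i) φ
  let ℓ' (k : I) (n : ℕ) : (RM.P (j + n)).M →ₗ[𝒜.A] (RT.P n).M :=
    (Finsupp.lapply k ∘ₗ ℓ n).restrictScalars 𝒜.A
  have hℓ' (k : I) (n : ℕ) : (RT.d n).lin ∘ₗ ℓ' k (n + 1) = ℓ' k n ∘ₗ (RM.d (j + n)).lin :=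
    LinearMap.ext fun x => DFunLike.congr_fun (LinearMap.congr_fun (hℓ n) x) k
  refine ⟨I, s, fun k => (φ ∘ₗ Finsupp.lsingle k).restrictScalars 𝒜.A, _,
    fun k => .ofComm (ℓ' k) (hℓ' k), LinearMap.ext fun x => ?_⟩
  rw [LinearMap.sum_apply]
  exact (LinearMap.congr_fun hφ x).symm.trans (hs x)

theorem span_yonedaMul_eq_top [IsSemisimpleRing (𝒜.grading 0)] (hT : IsTrivialGMod T)
    (hRT : (RT.P i).GenInDeg a) (hj : (RM.P j).GenInDeg b) (hRM : (RM.P (i + j)).GenInDeg (a + b))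
    {μ : ∀ i j : ℕ, ExtQ T RT i →ₗ[F] ExtQ T RM j →ₗ[F] ExtQ T RM (i + j)}
    (hμ : IsYonedaMul T RT RM μ) :
    Submodule.span F {z : ExtQ T RM (i + j) | ∃ x y, z = μ i j x y} = ⊤ := by
  refine eq_top_iff.2 fun z _ => ?_
  obtain ⟨⟨h, hh⟩, rfl⟩ := Submodule.mkQ_surjective _ z
  obtain ⟨I, s, f, g, L, rfl⟩ := exists_eq_sum_comp_chainLift hT hRT hj rfl hRM h
  have hsum : (⟨_, hh⟩ : cocyc T RM (i + j)) =
      ∑ k ∈ s, ⟨f k ∘ₗ (L k).ℓ (i + j) i rfl, RM.mem_cocyc hT _ _⟩ :=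
    Subtype.ext (by rw [AddSubmonoidClass.coe_finsetSum])
  rw [hsum, map_sum]
  exact Submodule.sum_mem _ fun k _ => Submodule.subset_span
    ⟨extCls T (RT.mem_cocyc hT i (f k)), extCls T (RM.mem_cocyc hT j (g k)),
      (hμ i j (f k) _ (g k) _ (L k) (RM.mem_cocyc hT _ _)).symm⟩

lemma surjective_lift_of_span_eq_top {R M N P : Type*} [CommSemiring R] [AddCommMonoid M]
    [AddCommMonoid N] [AddCommMonoid P] [Module R M] [Module R N] [Module R P]
    {f : M →ₗ[R] N →ₗ[R] P} (h : Submodule.span R {z | ∃ x y, z = f x y} = ⊤) :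
    Function.Surjective (TensorProduct.lift f) := by
  rw [← LinearMap.range_eq_top, eq_top_iff, ← h, Submodule.span_le]
  rintro _ ⟨x, y, rfl⟩
  exact ⟨x ⊗ₜ[R] y, TensorProduct.lift.tmul x y⟩

end GradedAlg

open GradedAlg in
theorem yoneda_mul_surjective_of_jump_additive_general
    {F : Type} [Field F] {𝒜 : GradedAlg F} [IsSemisimpleRing (𝒜.grading 0)]
    {M T : 𝒜.GMod} (hT : IsTrivialGMod T) {RT : MinRes T} {RM : MinRes M}
    {μ : ∀ i j : ℕ, ExtQ T RT i →ₗ[F] ExtQ T RM j →ₗ[F] ExtQ T RM (i + j)}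
    (hμ : IsYonedaMul T RT RM μ) {i j : ℕ} {a b : ℤ}
    (hi : (RT.P i).GenInDeg a) (hj : (RM.P j).GenInDeg b)
    (hij : (RM.P (i + j)).GenInDeg (a + b)) :
    Function.Surjective (TensorProduct.lift (μ i j)) ∧
    Submodule.span F {z : ExtQ T RM (i + j) | ∃ x y, z = μ i j x y} = ⊤ :=
  have hspan := span_yonedaMul_eq_top hT hi hj hij hμ
  ⟨surjective_lift_of_span_eq_top hspan, hspan⟩

open GradedAlg in
/-- **Lemma 2.9.** Suppose `P` is a minimal graded projective resolution of the trivial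
`A`-module `A_0` in which each `P_n` is finitely generated with generators in degree
`δ^d_p(n)`.  If `δ^d_p(i+j) = δ^d_p(i) + δ^d_p(j)` then the Yoneda multiplication
`Ext^i_A(A_0,A_0) ⊗_F Ext^j_A(A_0,A_0) → Ext^{i+j}_A(A_0,A_0)` is surjective; moreover
`Ext^{i+j} = Ext^i · Ext^j = Ext^j · Ext^i`. -/
theorem yoneda_mul_surjective_of_jump_additive
    {F : Type} [Field F] (𝒜 : GradedAlg F) (hA : 𝒜.Standing)
    (p d : ℕ) (hp : 2 ≤ p) (hpd : p ≤ d)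
    (T : 𝒜.GMod) (hT : IsTrivialGMod T)
    (R : MinRes T)
    (hgen : ∀ n : ℕ, (R.P n).GenInDeg (jump d p n : ℤ))
    (μ : ∀ i j : ℕ, ExtQ T R i →ₗ[F] ExtQ T R j →ₗ[F] ExtQ T R (i + j))
    (hμ : IsYonedaMul T R R μ)
    (i j : ℕ) (hij : jump d p (i + j) = jump d p i + jump d p j) :
    Function.Surjective (TensorProduct.lift (μ i j)) ∧
    Submodule.span F {z : ExtQ T R (i + j) | ∃ x y, z = μ i j x y} = ⊤ ∧
    Submodule.span F {z : ExtQ T R (j + i) | ∃ x y, z = μ j i x y} = ⊤ := by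
  have := hA.semisimple
  have hμ' (i j : ℕ) (hij : jump d p (i + j) = jump d p i + jump d p j) :=
    yoneda_mul_surjective_of_jump_additive_general hT hμ (hgen i) (hgen j)
      (by exact_mod_cast hij ▸ hgen (i + j))
  exact ⟨(hμ' i j hij).1, (hμ' i j hij).2, (hμ' j i (by rw [add_comm j, hij, add_comm])).2⟩
end
end

section
/- Let A be a piecewise-Koszul algebra with period p and jump degree d, and let M be a piecewise-Koszul A-module generated in degree s, with graded Jacobson radical J = ⊕_{i≥1} A_i. Then for every n ≥ 1 there is an exact sequence 0 → Ext^{n−1}_A(JM,A_0) → Ext^n_A(M/JM,A_0) → Ext^n_A(M,A_0) → 0, and in the shift-grading all three modules in this sequence are concentrated in shift-degree δ^d_p(n)+s. -/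
noncomputable section

/-!
A minimal resolution `P` satisfies `d P ⊆ JP`, and `J` kills `T = A_0`, so `Ext^n(-, T)` is simply
`Hom(P_n, T)`. Lift the projection `π : M → Q = M/JM` to a chain map `φ : RM → RQ`. As `Q` is a
direct summand of a sum of copies of `T(-s)`, the terms of `RQ` are generated in the same degrees
`δ n + s` as those of `RM`. By induction `φ_n` is injective in the generating degree, hence modulo
`J`, and since `RQ_n / J RQ_n` is semisimple, `φ_n` is then a split monomorphism, with a retraction
`ρ_n` of degree zero. The complements `ker ρ_{n+1}` form a minimal resolution of `JM = ker π`. Any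
two minimal resolutions of a module agree modulo `J`, which is all that `Hom(-, T)` sees, and
applying `Hom(-, T)` to the split exact sequences `RM_{n+1} → RQ_{n+1} → ker ρ_{n+1}` gives the
result.
-/

namespace GradedAlg

variable {F : Type} [Field F] {𝒜 : GradedAlg F}

section Components

variable (M : 𝒜.GMod)

instance GMod.decomposition : DirectSum.Decomposition M.grading :=
  (DirectSum.isInternal_submodule_of_iSupIndep_of_iSup_eq_top M.indep
    M.sup_eq_top).chooseDecomposition

/-- The projection of a graded module onto its component of degree `j`. -/
def GMod.proj_s6 (j : ℤ) : M.M →ₗ[F] M.M :=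
  (M.grading j).subtype ∘ₗ DirectSum.component F ℤ (fun i ↦ M.grading i) j ∘ₗ
    (DirectSum.decomposeLinearEquiv M.grading).toLinearMap

variable {M}

theorem GMod.proj_mem_s6 (j : ℤ) (x : M.M) : M.proj_s6 j x ∈ M.grading j :=
  SetLike.coe_mem _

theorem GMod.proj_of_mem_same {j : ℤ} {x : M.M} (hx : x ∈ M.grading j) : M.proj_s6 j x = x :=
  DirectSum.decompose_of_mem_same M.grading hx

theorem GMod.proj_of_mem_ne {i j : ℤ} {x : M.M} (hx : x ∈ M.grading i) (h : i ≠ j) :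
    M.proj_s6 j x = 0 :=
  DirectSum.decompose_of_mem_ne M.grading hx h

theorem GMod.mem_of_proj_mem {S : Type*} [SetLike S M.M] [AddSubmonoidClass S M.M] {p : S}
    {x : M.M} (h : ∀ j, M.proj_s6 j x ∈ p) : x ∈ p := by
  classical
  rw [← DirectSum.sum_support_decompose M.grading x]
  exact sum_mem fun j _ ↦ h j

theorem GMod.isHomogeneous_iff {K : Submodule 𝒜.A M.M} :
    K.IsHomogeneous M.grading ↔ ∀ j, ∀ x ∈ K, M.proj_s6 j x ∈ K :=
  Iff.rfl

theorem GMod.lhom_ext {V : Type*} [AddCommGroup V] [Module 𝒜.A V] {f g : M.M →ₗ[𝒜.A] V}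
    (h : ∀ j, ∀ x ∈ M.grading j, f x = g x) : f = g := by
  ext x
  induction x using DirectSum.Decomposition.inductionOn M.grading with
  | zero => simp only [map_zero]
  | homogeneous x => exact h _ _ x.2
  | add x y hx hy => simp only [map_add, hx, hy]

theorem GMod.proj_smul_of_mem {e : ℕ} {a : 𝒜.A} (ha : a ∈ 𝒜.grading e) (i : ℤ) (x : M.M) :
    M.proj_s6 i (a • x) = a • M.proj_s6 (i - e) x := by
  induction x using DirectSum.Decomposition.inductionOn M.grading with
  | zero => simp only [smul_zero, map_zero]
  | @homogeneous j x =>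
    obtain rfl | h := eq_or_ne ((e : ℤ) + j) i
    · rw [proj_of_mem_same (M.smul_mem ha x.2), add_sub_cancel_left, proj_of_mem_same x.2]
    · rw [proj_of_mem_ne (M.smul_mem ha x.2) h, proj_of_mem_ne x.2 (by omega), smul_zero]
  | add x y hx hy => simp only [smul_add, map_add, hx, hy]

end Components

section RadicalFiltration

instance jideal_isTwoSided : 𝒜.jideal.IsTwoSided :=
  inferInstanceAs (RingHom.ker (GradedRing.projZeroRingHom 𝒜.grading)).IsTwoSided

theorem sub_projZero_mem_jideal (a : 𝒜.A) :
    a - GradedRing.projZeroRingHom 𝒜.grading a ∈ 𝒜.jideal := by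
  rw [jideal, HomogeneousIdeal.toIdeal_irrelevant, RingHom.mem_ker, map_sub, sub_eq_zero]
  simp

variable {M : 𝒜.GMod}

variable (M) in
/-- The submodule of elements all of whose components of degree `< b` vanish. -/
def GMod.truncGE (b : ℤ) : Submodule 𝒜.A M.M where
  carrier := {x | ∀ i < b, M.proj_s6 i x = 0}
  zero_mem' i _ := map_zero _
  add_mem' hx hy i hi := by rw [map_add, hx i hi, hy i hi, add_zero]
  smul_mem' a x hx i hi := by
    induction a using DirectSum.Decomposition.inductionOn 𝒜.grading with
    | zero => rw [zero_smul, map_zero]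
    | homogeneous a => rw [proj_smul_of_mem a.2, hx _ (by omega), smul_zero]
    | add a b ha hb => rw [add_smul, map_add, ha, hb, add_zero]

theorem GMod.truncGE_antitone : Antitone M.truncGE :=
  fun _ _ h _ hx i hi ↦ hx i (hi.trans_le h)

theorem GMod.mem_truncGE_of_mem {b j : ℤ} {x : M.M} (hx : x ∈ M.grading j) (h : b ≤ j) :
    x ∈ M.truncGE b :=
  fun _ hi ↦ proj_of_mem_ne hx (hi.trans_le h).ne'

theorem GMod.exists_truncGE_eq_top (hM : Module.Finite 𝒜.A M.M) : ∃ b, M.truncGE b = ⊤ := by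
  suffices h : ∀ N : Submodule 𝒜.A M.M, N.FG → ∃ b, N ≤ M.truncGE b from
    (h ⊤ hM.fg_top).imp fun _ ↦ top_le_iff.1
  intro N hN
  induction N, hN using Submodule.fg_induction with
  | singleton x =>
    simp only [Submodule.span_singleton_le_iff_mem]
    induction x using DirectSum.Decomposition.inductionOn M.grading with
    | zero => exact ⟨0, zero_mem _⟩
    | @homogeneous j x => exact ⟨j, mem_truncGE_of_mem x.2 le_rfl⟩
    | add x y hx hy =>
      obtain ⟨⟨a, ha⟩, b, hb⟩ := hx, hy
      exact ⟨min a b, add_mem (truncGE_antitone (min_le_left a b) ha)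
        (truncGE_antitone (min_le_right a b) hb)⟩
  | sup K L _ _ hK hL =>
    obtain ⟨⟨a, ha⟩, b, hb⟩ := hK, hL
    exact ⟨min a b, sup_le (ha.trans (truncGE_antitone (min_le_left a b)))
      (hb.trans (truncGE_antitone (min_le_right a b)))⟩

theorem GMod.jideal_smul_truncGE_le (b : ℤ) : 𝒜.jideal • M.truncGE b ≤ M.truncGE (b + 1) := by
  refine Submodule.smul_le.2 fun a ha x hx ↦ ?_
  replace ha : a ∈ AddSubmonoid.closure (⋃ i > 0, (𝒜.grading i : Set 𝒜.A)) :=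
    (HomogeneousIdeal.irrelevant_eq_closure 𝒜.grading).le ha
  induction ha using AddSubmonoid.closure_induction with
  | mem a ha =>
    obtain ⟨e, he, hae⟩ : ∃ e > 0, a ∈ 𝒜.grading e := by simpa using ha
    intro i hi
    rw [proj_smul_of_mem hae, hx _ (by omega), smul_zero]
  | zero => rw [zero_smul]; exact zero_mem _
  | add a c _ _ ha hc => rw [add_smul]; exact add_mem ha hc

/-- Graded Nakayama lemma: `M` is bounded below and `J` raises degrees, so that iterating
`M = K + JM` pushes the remainder above any given degree. -/
theorem GMod.eq_top_of_sup_jideal_smul_top (hM : Module.Finite 𝒜.A M.M) {K : Submodule 𝒜.A M.M}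
    (hK : K.IsHomogeneous M.grading) (h : K ⊔ 𝒜.jideal • ⊤ = ⊤) : K = ⊤ := by
  obtain ⟨b, hb⟩ := exists_truncGE_eq_top hM
  have htrunc (m : ℕ) : K ⊔ M.truncGE (b + m) = ⊤ := by
    induction m with
    | zero => simp [hb]
    | succ m ih =>
      refine top_le_iff.1 ?_
      calc ⊤ = K ⊔ 𝒜.jideal • (K ⊔ M.truncGE (b + m)) := by rw [ih, h]
        _ = K ⊔ (𝒜.jideal • K ⊔ 𝒜.jideal • M.truncGE (b + m)) := by rw [Submodule.smul_sup]
        _ ≤ K ⊔ M.truncGE (b + m + 1) := sup_le le_sup_left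
            (sup_le (Submodule.smul_le_right.trans le_sup_left)
              ((jideal_smul_truncGE_le _).trans le_sup_right))
        _ = K ⊔ M.truncGE (b + (m + 1 : ℕ)) := by rw [Nat.cast_succ, add_assoc]
  refine top_le_iff.1 fun x _ ↦ mem_of_proj_mem fun j ↦ ?_
  have hx : x ∈ K ⊔ M.truncGE (b + (j + 1 - b).toNat) := by rw [htrunc]; trivial
  obtain ⟨k, hk, t, ht, rfl⟩ := Submodule.mem_sup.1 hx
  rw [map_add, ht j (by omega), add_zero]
  exact hK j hk

end RadicalFiltration

section GenInDeg

variable {M : 𝒜.GMod} {t : ℤ}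

theorem GMod.GenInDeg.truncGE_eq_top (h : M.GenInDeg t) : M.truncGE t = ⊤ :=
  top_le_iff.1 <| h.ge.trans <| Submodule.span_le.2 fun _ hx ↦ mem_truncGE_of_mem hx le_rfl

theorem GMod.GenInDeg.proj_eq_zero_of_mem (h : M.GenInDeg t) {x : M.M}
    (hx : x ∈ 𝒜.jideal • (⊤ : Submodule 𝒜.A M.M)) : M.proj_s6 t x = 0 := by
  rw [← h.truncGE_eq_top] at hx
  exact jideal_smul_truncGE_le t hx t (lt_add_one t)

theorem GMod.GenInDeg.sub_proj_mem (h : M.GenInDeg t) (x : M.M) :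
    x - M.proj_s6 t x ∈ 𝒜.jideal • (⊤ : Submodule 𝒜.A M.M) := by
  obtain ⟨y, hy, hxy⟩ : ∃ y ∈ M.grading t, x - y ∈ 𝒜.jideal • (⊤ : Submodule 𝒜.A M.M) := by
    have hx : x ∈ Submodule.span 𝒜.A (M.grading t : Set M.M) := h.ge trivial
    induction hx using Submodule.closure_induction with
    | zero => exact ⟨0, zero_mem _, by rw [sub_zero]; exact zero_mem _⟩
    | add x y _ _ hx hy =>
      obtain ⟨⟨x', hx', hxx'⟩, y', hy', hyy'⟩ := hx, hy
      exact ⟨x' + y', add_mem hx' hy', add_sub_add_comm x y x' y' ▸ add_mem hxx' hyy'⟩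
    | smul_mem a x hx =>
      refine ⟨GradedRing.projZeroRingHom 𝒜.grading a • x, ?_, ?_⟩
      · simpa using M.smul_mem (SetLike.coe_mem (DirectSum.decompose 𝒜.grading a 0)) hx
      · rw [← sub_smul]
        exact Submodule.smul_mem_smul (sub_projZero_mem_jideal a) trivial
  have hproj := h.proj_eq_zero_of_mem hxy
  rw [map_sub, proj_of_mem_same hy, sub_eq_zero] at hproj
  rwa [hproj]

theorem GMod.GenInDeg.mem_jideal_smul_top_iff (h : M.GenInDeg t) {x : M.M} :
    x ∈ 𝒜.jideal • (⊤ : Submodule 𝒜.A M.M) ↔ M.proj_s6 t x = 0 :=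
  ⟨h.proj_eq_zero_of_mem, fun hx ↦ by simpa only [hx, sub_zero] using h.sub_proj_mem x⟩

theorem GMod.isHomogeneous_span_grading (M : 𝒜.GMod) (t : ℤ) :
    (Submodule.span 𝒜.A (M.grading t : Set M.M)).IsHomogeneous M.grading := by
  refine isHomogeneous_iff.2 fun j x hx ↦ ?_
  induction hx using Submodule.span_induction generalizing j with
  | mem x hx =>
    obtain rfl | h := eq_or_ne t j
    · rw [proj_of_mem_same hx]; exact Submodule.subset_span hx
    · rw [proj_of_mem_ne hx h]; exact zero_mem _
  | zero => rw [map_zero]; exact zero_mem _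
  | add x y _ _ hx hy => rw [map_add]; exact add_mem (hx j) (hy j)
  | smul a x _ hx =>
    induction a using DirectSum.Decomposition.inductionOn 𝒜.grading with
    | zero => rw [zero_smul, map_zero]; exact zero_mem _
    | homogeneous a => rw [proj_smul_of_mem a.2]; exact Submodule.smul_mem _ _ (hx _)
    | add a b ha hb => rw [add_smul, map_add]; exact add_mem ha hb

theorem GMod.genInDeg_of_exists_sub_mem (hM : Module.Finite 𝒜.A M.M)
    (h : ∀ x, ∃ y ∈ M.grading t, x - y ∈ 𝒜.jideal • (⊤ : Submodule 𝒜.A M.M)) :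
    M.GenInDeg t := by
  refine eq_top_of_sup_jideal_smul_top hM (M.isHomogeneous_span_grading t)
    (top_le_iff.1 fun x _ ↦ ?_)
  obtain ⟨y, hy, hxy⟩ := h x
  exact Submodule.mem_sup.2 ⟨y, Submodule.subset_span hy, x - y, hxy, add_sub_cancel y x⟩

end GenInDeg

section HasDegree

variable {M N L : 𝒜.GMod}

/-- An `A`-linear map of graded modules is homogeneous of degree `k` if it sends the component of
degree `j` into the component of degree `j + k`. -/
def HasDegree (f : M.M →ₗ[𝒜.A] N.M) (k : ℤ) : Prop :=
  ∀ j, ∀ x ∈ M.grading j, f x ∈ N.grading (j + k)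

theorem hasDegree_zero_iff {f : M.M →ₗ[𝒜.A] N.M} :
    HasDegree f 0 ↔ ∀ j, ∀ x ∈ M.grading j, f x ∈ N.grading j := by
  simp only [HasDegree, add_zero]

theorem GHom.hasDegree (f : GHom M N) : HasDegree f.lin 0 :=
  hasDegree_zero_iff.2 f.grad

theorem HasDegree.id : HasDegree (LinearMap.id : M.M →ₗ[𝒜.A] M.M) 0 :=
  hasDegree_zero_iff.2 fun _ _ hx ↦ hx

theorem HasDegree.comp {g : N.M →ₗ[𝒜.A] L.M} {f : M.M →ₗ[𝒜.A] N.M} {a b c : ℤ}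
    (hg : HasDegree g b) (hf : HasDegree f a) (h : a + b = c) : HasDegree (g ∘ₗ f) c := by
  subst h
  intro j x hx
  rw [← add_assoc]
  exact hg _ _ (hf j x hx)

theorem HasDegree.sub {f g : M.M →ₗ[𝒜.A] N.M} {k : ℤ} (hf : HasDegree f k) (hg : HasDegree g k) :
    HasDegree (f - g) k :=
  fun j x hx ↦ sub_mem (hf j x hx) (hg j x hx)

theorem HasDegree.proj_apply {f : M.M →ₗ[𝒜.A] N.M} {k : ℤ} (hf : HasDegree f k) (j : ℤ)
    (x : M.M) : N.proj_s6 (j + k) (f x) = f (M.proj_s6 j x) := by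
  induction x using DirectSum.Decomposition.inductionOn M.grading with
  | zero => simp only [map_zero]
  | @homogeneous i x =>
    obtain rfl | h := eq_or_ne i j
    · rw [GMod.proj_of_mem_same (hf i x x.2), GMod.proj_of_mem_same x.2]
    · rw [GMod.proj_of_mem_ne (hf i x x.2) (by omega), GMod.proj_of_mem_ne x.2 h, map_zero]
  | add x y hx hy => simp only [map_add, hx, hy]

theorem HasDegree.proj_apply_zero {f : M.M →ₗ[𝒜.A] N.M} (hf : HasDegree f 0) (j : ℤ) (x : M.M) :
    N.proj_s6 j (f x) = f (M.proj_s6 j x) := by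
  simpa only [add_zero] using hf.proj_apply j x

theorem HasDegree.isHomogeneous_range {f : M.M →ₗ[𝒜.A] N.M} (hf : HasDegree f 0) :
    (LinearMap.range f).IsHomogeneous N.grading := by
  refine GMod.isHomogeneous_iff.2 ?_
  rintro j _ ⟨x, rfl⟩
  exact ⟨M.proj_s6 j x, (hf.proj_apply_zero j x).symm⟩

theorem HasDegree.isHomogeneous_ker {f : M.M →ₗ[𝒜.A] N.M} (hf : HasDegree f 0) :
    (LinearMap.ker f).IsHomogeneous M.grading := by
  refine GMod.isHomogeneous_iff.2 fun j x hx ↦ ?_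
  rw [LinearMap.mem_ker, ← hf.proj_apply_zero, LinearMap.mem_ker.1 hx, map_zero]

/-- The degree `k` part of an `A`-linear map `f`, which sends `x` of degree `j` to the component
of `f x` of degree `j + k`. -/
def degPart (f : M.M →ₗ[𝒜.A] N.M) (k : ℤ) : M.M →ₗ[𝒜.A] N.M :=
  let g : M.M →ₗ[F] N.M :=
    DirectSum.toModule F ℤ N.M
      (fun j ↦ N.proj_s6 (j + k) ∘ₗ f.restrictScalars F ∘ₗ (M.grading j).subtype) ∘ₗ
    (DirectSum.decomposeLinearEquiv M.grading).toLinearMap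
  have hg {j : ℤ} {x : M.M} (hx : x ∈ M.grading j) : g x = N.proj_s6 (j + k) (f x) := by
    simp only [g, LinearMap.comp_apply, LinearEquiv.coe_coe, DirectSum.decomposeLinearEquiv_apply,
      DirectSum.decompose_of_mem M.grading hx]
    exact DirectSum.toModule_lof F j _
  { g with
    map_smul' a x := by
      change g (a • x) = a • g x
      induction a using DirectSum.Decomposition.inductionOn 𝒜.grading with
      | zero => simp only [zero_smul, map_zero]
      | @homogeneous e a =>
        induction x using DirectSum.Decomposition.inductionOn M.grading with
        | zero => simp only [smul_zero, map_zero]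
        | @homogeneous j x =>
          rw [hg (M.smul_mem a.2 x.2), hg x.2, map_smul, GMod.proj_smul_of_mem a.2]
          congr 3
          ring
        | add x y hx hy => simp only [smul_add, map_add, hx, hy]
      | add a b ha hb => simp only [add_smul, map_add, ha, hb] }

theorem degPart_of_mem (f : M.M →ₗ[𝒜.A] N.M) (k : ℤ) {j : ℤ} {x : M.M} (hx : x ∈ M.grading j) :
    degPart f k x = N.proj_s6 (j + k) (f x) := by
  change (DirectSum.toModule F ℤ N.M _) (DirectSum.decompose M.grading x) = _
  rw [DirectSum.decompose_of_mem M.grading hx]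
  exact DirectSum.toModule_lof F j _

theorem hasDegree_degPart (f : M.M →ₗ[𝒜.A] N.M) (k : ℤ) : HasDegree (degPart f k) k :=
  fun _ _ hx ↦ degPart_of_mem f k hx ▸ GMod.proj_mem_s6 _ _

theorem GMod.GenInDeg.of_surjective {t : ℤ} (h : M.GenInDeg t) {f : M.M →ₗ[𝒜.A] N.M}
    (hf : HasDegree f 0) (hsurj : Function.Surjective f) : N.GenInDeg t := by
  refine top_le_iff.1 ?_
  calc ⊤ = (Submodule.span 𝒜.A (M.grading t : Set M.M)).map f := by
        rw [h, Submodule.map_top, LinearMap.range_eq_top.2 hsurj]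
    _ ≤ Submodule.span 𝒜.A (N.grading t : Set N.M) := by
        rw [Submodule.map_span]
        exact Submodule.span_mono (Set.image_subset_iff.2 (hasDegree_zero_iff.1 hf t))

end HasDegree

section Lifting

theorem exists_comp_eq_of_range_le {R P X Y : Type*} [Ring R] [AddCommGroup P] [Module R P]
    [Module.Projective R P] [AddCommGroup X] [Module R X] [AddCommGroup Y] [Module R Y]
    {f : P →ₗ[R] X} {g : Y →ₗ[R] X} (h : LinearMap.range f ≤ LinearMap.range g) :
    ∃ k : P →ₗ[R] Y, g ∘ₗ k = f := by
  obtain ⟨k, hk⟩ := Module.projective_lifting_property g.rangeRestrict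
    (f.codRestrict (LinearMap.range g) fun x ↦ h ⟨x, rfl⟩) g.surjective_rangeRestrict
  exact ⟨k, LinearMap.ext fun x ↦ congrArg Subtype.val (LinearMap.congr_fun hk x)⟩

theorem HasDegree.exists_comp_eq_of_range_le {P X Y : 𝒜.GMod} (hP : Module.Projective 𝒜.A P.M)
    {f : P.M →ₗ[𝒜.A] X.M} {g : Y.M →ₗ[𝒜.A] X.M} {k : ℤ} (hf : HasDegree f k) (hg : HasDegree g 0)
    (h : LinearMap.range f ≤ LinearMap.range g) :
    ∃ l : P.M →ₗ[𝒜.A] Y.M, HasDegree l k ∧ g ∘ₗ l = f := by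
  obtain ⟨l, hl⟩ := GradedAlg.exists_comp_eq_of_range_le h
  refine ⟨degPart l k, hasDegree_degPart l k, GMod.lhom_ext fun j x hx ↦ ?_⟩
  rw [LinearMap.comp_apply, degPart_of_mem l k hx, ← hg.proj_apply_zero, ← LinearMap.comp_apply,
    hl, GMod.proj_of_mem_same (hf j x hx)]

end Lifting

section RadicalQuotient

theorem apply_mem_jideal_smul_top {V W : Type*} [AddCommGroup V] [Module 𝒜.A V] [AddCommGroup W]
    [Module 𝒜.A W] (f : V →ₗ[𝒜.A] W) {x : V} (hx : x ∈ 𝒜.jideal • (⊤ : Submodule 𝒜.A V)) :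
    f x ∈ 𝒜.jideal • (⊤ : Submodule 𝒜.A W) :=
  Submodule.smul_top_le_comap_smul_top 𝒜.jideal f hx

variable {V W : Type*} [AddCommGroup V] [Module 𝒜.A V] [AddCommGroup W] [Module 𝒜.A W]

theorem apply_eq_zero_of_isTorsionBySet (hW : Module.IsTorsionBySet 𝒜.A W 𝒜.jideal)
    (f : V →ₗ[𝒜.A] W) {x : V} (hx : x ∈ 𝒜.jideal • (⊤ : Submodule 𝒜.A V)) : f x = 0 := by
  have h : 𝒜.jideal • (⊤ : Submodule 𝒜.A V) ≤ LinearMap.ker f :=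
    Submodule.smul_le.2 fun a ha v _ ↦ by
      rw [LinearMap.mem_ker, map_smul]
      exact @hW (f v) ⟨a, ha⟩
  exact h hx

theorem isTorsionBySet_of_injective {R V W : Type*} [Semiring R] [AddCommMonoid V] [Module R V]
    [AddCommMonoid W] [Module R W] {s : Set R} {f : V →ₗ[R] W} (hf : Function.Injective f)
    (hW : Module.IsTorsionBySet R W s) : Module.IsTorsionBySet R V s := fun v a ↦
  hf ((map_smul f _ v).trans ((@hW (f v) a).trans (map_zero f).symm))

theorem IsTrivialGMod.isTorsionBySet {T : 𝒜.GMod} (hT : IsTrivialGMod T) :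
    Module.IsTorsionBySet 𝒜.A T.M 𝒜.jideal := by
  obtain ⟨e⟩ := hT.2
  exact isTorsionBySet_of_injective (f := e.toLinearMap) e.injective
    ((Module.isTorsionBySet_quotient_iff 𝒜.jideal _).2
      fun x _ hb ↦ 𝒜.jideal.mul_mem_right x hb)

instance isSemisimpleRing_quotient_jideal [IsSemisimpleRing (𝒜.grading 0)] :
    IsSemisimpleRing (𝒜.A ⧸ 𝒜.jideal) :=
  have : IsSemisimpleRing (SetLike.GradeZero.subring 𝒜.grading) :=
    inferInstanceAs (IsSemisimpleRing (𝒜.grading 0))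
  RingHom.isSemisimpleRing_of_surjective
    ((Ideal.Quotient.mk 𝒜.jideal).comp (SetLike.GradeZero.subring 𝒜.grading).subtype)
    fun y ↦ by
      obtain ⟨a, rfl⟩ := Ideal.Quotient.mk_surjective y
      exact ⟨GradedRing.projZeroRingHom' 𝒜.grading a,
        (Ideal.Quotient.eq.2 (sub_projZero_mem_jideal a)).symm⟩

theorem isSemisimpleModule_of_isTorsionBySet [IsSemisimpleRing (𝒜.grading 0)]
    (hV : Module.IsTorsionBySet 𝒜.A V 𝒜.jideal) : IsSemisimpleModule 𝒜.A V :=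
  let _ := hV.module
  hV.isSemisimpleModule_iff.1 inferInstance

theorem IsTrivialGMod.exists_sum_comp_eq_id [IsSemisimpleRing (𝒜.grading 0)] {T : 𝒜.GMod}
    (hT : IsTrivialGMod T) [Module.Finite 𝒜.A V] (hV : Module.IsTorsionBySet 𝒜.A V 𝒜.jideal) :
    ∃ (k : ℕ) (r : Fin k → T.M →ₗ[𝒜.A] V) (i : Fin k → V →ₗ[𝒜.A] T.M),
      ∑ l, r l ∘ₗ i l = LinearMap.id := by
  let _ := hV.module
  have : IsScalarTower 𝒜.A (𝒜.A ⧸ 𝒜.jideal) V := hV.isScalarTower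
  have := Module.projective_of_isSemisimpleRing (𝒜.A ⧸ 𝒜.jideal) V
  have : Module.Finite (𝒜.A ⧸ 𝒜.jideal) V := .of_restrictScalars_finite 𝒜.A _ _
  obtain ⟨k, f, g, -, -, hfg⟩ :=
    Module.Finite.exists_comp_eq_id_of_projective (𝒜.A ⧸ 𝒜.jideal) V
  obtain ⟨e⟩ := hT.2
  refine ⟨k, fun l ↦ f.restrictScalars 𝒜.A ∘ₗ .single 𝒜.A _ l ∘ₗ e.toLinearMap,
    fun l ↦ e.symm.toLinearMap ∘ₗ .proj l ∘ₗ g.restrictScalars 𝒜.A, LinearMap.ext fun x ↦ ?_⟩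
  simp only [LinearMap.sum_apply, LinearMap.comp_apply, LinearEquiv.coe_coe,
    LinearEquiv.apply_symm_apply, LinearMap.restrictScalars_apply, LinearMap.proj_apply,
    LinearMap.single_apply, ← map_sum, Finset.univ_sum_single]
  exact LinearMap.congr_fun hfg x

theorem exists_comp_eq_id_of_injOn [IsSemisimpleRing (𝒜.grading 0)] {P P' : 𝒜.GMod}
    (hP' : Module.Projective 𝒜.A P'.M) {φ : P.M →ₗ[𝒜.A] P'.M} (hφ : HasDegree φ 0) {t : ℤ}
    (hP : P.GenInDeg t) (hP't : P'.GenInDeg t) (hinj : ∀ x ∈ P.grading t, φ x = 0 → x = 0) :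
    ∃ ρ : P'.M →ₗ[𝒜.A] P.M, HasDegree ρ 0 ∧ ρ ∘ₗ φ = LinearMap.id := by
  let JP := 𝒜.jideal • (⊤ : Submodule 𝒜.A P.M)
  let JP' := 𝒜.jideal • (⊤ : Submodule 𝒜.A P'.M)
  have : IsSemisimpleModule 𝒜.A (P'.M ⧸ JP') :=
    isSemisimpleModule_of_isTorsionBySet (Module.isTorsionBySet_quotient_ideal_smul _ _)
  have hmap : Function.Injective
      (JP.mapQ JP' φ fun x hx ↦ apply_mem_jideal_smul_top φ hx) := by
    refine (injective_iff_map_eq_zero _).2 fun v hv ↦ ?_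
    obtain ⟨x, rfl⟩ := Submodule.Quotient.mk_surjective _ v
    have hφx : φ (P.proj_s6 t x) = 0 := by
      rw [← hφ.proj_apply_zero]
      exact hP't.proj_eq_zero_of_mem ((Submodule.Quotient.mk_eq_zero _).1 hv)
    exact (Submodule.Quotient.mk_eq_zero _).2
      (hP.mem_jideal_smul_top_iff.2 (hinj _ (GMod.proj_mem_s6 t x) hφx))
  obtain ⟨r, hr⟩ := IsSemisimpleModule.extension_property _ hmap LinearMap.id
  obtain ⟨h, hh⟩ := Module.projective_lifting_property JP.mkQ (r ∘ₗ JP'.mkQ) JP.mkQ_surjective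
  refine ⟨degPart h 0, hasDegree_degPart h 0, LinearMap.ext_on hP fun x hx ↦ ?_⟩
  have hmem : h (φ x) - x ∈ JP := by
    refine (Submodule.Quotient.eq _).1 ?_
    exact (LinearMap.congr_fun hh (φ x)).trans (LinearMap.congr_fun hr (JP.mkQ x))
  have hproj := hP.proj_eq_zero_of_mem hmem
  rw [map_sub, GMod.proj_of_mem_same hx, sub_eq_zero] at hproj
  rw [LinearMap.comp_apply, degPart_of_mem h 0 (hasDegree_zero_iff.1 hφ t x hx), add_zero, hproj,
    LinearMap.id_apply]

end RadicalQuotient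

section Comparison

variable {M N L : 𝒜.GMod}

theorem MinRes.aug_d_apply (R : MinRes M) (x : (R.P 1).M) : R.aug.lin ((R.d 0).lin x) = 0 :=
  LinearMap.mem_ker.1 (R.exact_aug ▸ LinearMap.mem_range_self _ x)

theorem MinRes.d_d_apply (R : MinRes M) (n : ℕ) (x : (R.P (n + 2)).M) :
    (R.d n).lin ((R.d (n + 1)).lin x) = 0 :=
  LinearMap.mem_ker.1 (R.exact n ▸ LinearMap.mem_range_self _ x)

theorem MinRes.exists_d_zero_eq (R : MinRes M) {x : (R.P 0).M} (hx : R.aug.lin x = 0) :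
    ∃ y, (R.d 0).lin y = x :=
  R.exact_aug.ge hx

theorem MinRes.exists_d_succ_eq (R : MinRes M) {n : ℕ} {x : (R.P (n + 1)).M}
    (hx : (R.d n).lin x = 0) : ∃ y, (R.d (n + 1)).lin y = x :=
  (R.exact n).ge hx

/-- The family `φ` of maps between the terms of two resolutions is a chain map lifting `f`. -/
structure IsLift (R : MinRes M) (R' : MinRes N) (f : M.M →ₗ[𝒜.A] N.M)
    (φ : ∀ n, (R.P n).M →ₗ[𝒜.A] (R'.P n).M) : Prop where
  aug (x : (R.P 0).M) : R'.aug.lin (φ 0 x) = f (R.aug.lin x)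
  d (n : ℕ) (x : (R.P (n + 1)).M) : (R'.d n).lin (φ (n + 1) x) = φ n ((R.d n).lin x)

variable {R : MinRes M} {R' : MinRes N} {R'' : MinRes L}

theorem IsLift.id (R : MinRes M) : IsLift R R LinearMap.id fun _ ↦ LinearMap.id where
  aug _ := rfl
  d _ _ := rfl

theorem IsLift.comp {g : N.M →ₗ[𝒜.A] L.M} {f : M.M →ₗ[𝒜.A] N.M}
    {ψ : ∀ n, (R'.P n).M →ₗ[𝒜.A] (R''.P n).M} {φ : ∀ n, (R.P n).M →ₗ[𝒜.A] (R'.P n).M}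
    (hψ : IsLift R' R'' g ψ) (hφ : IsLift R R' f φ) :
    IsLift R R'' (g ∘ₗ f) fun n ↦ ψ n ∘ₗ φ n where
  aug x := by simp only [LinearMap.comp_apply, hψ.aug, hφ.aug]
  d n x := by simp only [LinearMap.comp_apply, hψ.d, hφ.d]

theorem IsLift.sum {ι : Type*} [Fintype ι] {f : ι → M.M →ₗ[𝒜.A] N.M}
    {φ : ι → ∀ n, (R.P n).M →ₗ[𝒜.A] (R'.P n).M} (h : ∀ l, IsLift R R' (f l) (φ l)) :
    IsLift R R' (∑ l, f l) fun n ↦ ∑ l, φ l n where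
  aug x := by simp only [LinearMap.sum_apply, map_sum, (h _).aug]
  d n x := by simp only [LinearMap.sum_apply, map_sum, (h _).d]

variable (R R') in
theorem exists_isLift {f : M.M →ₗ[𝒜.A] N.M} {k : ℤ} (hf : HasDegree f k) :
    ∃ φ : ∀ n, (R.P n).M →ₗ[𝒜.A] (R'.P n).M, (∀ n, HasDegree (φ n) k) ∧ IsLift R R' f φ := by
  let S (n : ℕ) : Type := {φ : (R.P n).M →ₗ[𝒜.A] (R'.P n).M //
    HasDegree φ k ∧ LinearMap.range (φ ∘ₗ (R.d n).lin) ≤ LinearMap.range (R'.d n).lin}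
  have hzero : ∃ φ : S 0, R'.aug.lin ∘ₗ φ.1 = f ∘ₗ R.aug.lin := by
    obtain ⟨φ, hφ, h⟩ := HasDegree.exists_comp_eq_of_range_le (R.projective 0)
      (hf.comp R.aug.hasDegree (zero_add k)) R'.aug.hasDegree
      (le_top.trans (LinearMap.range_eq_top.2 R'.aug_surj).ge)
    refine ⟨⟨φ, hφ, ?_⟩, h⟩
    rintro _ ⟨x, rfl⟩
    refine R'.exists_d_zero_eq ((LinearMap.congr_fun h _).trans ?_)
    rw [LinearMap.comp_apply, R.aug_d_apply, map_zero]
  have hsucc (n : ℕ) (φ : S n) :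
      ∃ φ' : S (n + 1), (R'.d n).lin ∘ₗ φ'.1 = φ.1 ∘ₗ (R.d n).lin := by
    obtain ⟨φ', hφ', h⟩ := HasDegree.exists_comp_eq_of_range_le (R.projective (n + 1))
      (φ.2.1.comp (R.d n).hasDegree (zero_add k)) (R'.d n).hasDegree φ.2.2
    refine ⟨⟨φ', hφ', ?_⟩, h⟩
    rintro _ ⟨x, rfl⟩
    refine R'.exists_d_succ_eq ((LinearMap.congr_fun h _).trans ?_)
    rw [LinearMap.comp_apply, R.d_d_apply, map_zero]
  choose φ₀ hφ₀ using hzero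
  choose next hnext using hsucc
  let φ (n : ℕ) : S n := Nat.rec φ₀ next n
  exact ⟨fun n ↦ (φ n).1, fun n ↦ (φ n).2.1, LinearMap.congr_fun hφ₀,
    fun n ↦ LinearMap.congr_fun (hnext n (φ n))⟩

-- The maps `w` form a null-homotopy of `φ`, and `d w + w d` is radical-valued by minimality.
theorem IsLift.mem_jideal_smul_top {φ : ∀ n, (R.P n).M →ₗ[𝒜.A] (R'.P n).M}
    (h : IsLift R R' 0 φ) (n : ℕ) (x : (R.P n).M) :
    φ n x ∈ 𝒜.jideal • (⊤ : Submodule 𝒜.A (R'.P n).M) := by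
  suffices key : ∃ w : (R.P n).M →ₗ[𝒜.A] (R'.P (n + 1)).M,
      (∀ x, φ n ((R.d n).lin x) = (R'.d n).lin (w ((R.d n).lin x))) ∧
      ∀ x, φ n x ∈ 𝒜.jideal • (⊤ : Submodule 𝒜.A (R'.P n).M) from key.choose_spec.2 x
  clear x
  have := R.projective
  induction n with
  | zero =>
    obtain ⟨w, hw⟩ := exists_comp_eq_of_range_le (f := φ 0) (g := (R'.d 0).lin) <| by
      rintro _ ⟨x, rfl⟩
      exact R'.exists_d_zero_eq (h.aug x)
    replace hw := LinearMap.congr_fun hw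
    exact ⟨w, fun x ↦ (hw _).symm, fun x ↦ hw x ▸ R'.minimal 0 ⟨_, rfl⟩⟩
  | succ n ih =>
    obtain ⟨w, hw, -⟩ := ih
    obtain ⟨w', hw'⟩ := exists_comp_eq_of_range_le (f := φ (n + 1) - w ∘ₗ (R.d n).lin)
      (g := (R'.d (n + 1)).lin) <| by
        rintro _ ⟨x, rfl⟩
        refine R'.exists_d_succ_eq ?_
        rw [LinearMap.sub_apply, map_sub, h.d, hw, LinearMap.comp_apply, sub_self]
    have hφ (x) : φ (n + 1) x = (R'.d (n + 1)).lin (w' x) + w ((R.d n).lin x) :=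
      (sub_eq_iff_eq_add.1 (LinearMap.congr_fun hw' x).symm)
    refine ⟨w', fun x ↦ ?_, fun x ↦ ?_⟩
    · rw [hφ, R.d_d_apply, map_zero, add_zero]
    · rw [hφ]
      exact add_mem (R'.minimal (n + 1) ⟨_, rfl⟩)
        (apply_mem_jideal_smul_top w (R.minimal n ⟨_, rfl⟩))

theorem IsLift.sub_mem_jideal_smul_top {f : M.M →ₗ[𝒜.A] N.M}
    {φ ψ : ∀ n, (R.P n).M →ₗ[𝒜.A] (R'.P n).M} (hφ : IsLift R R' f φ) (hψ : IsLift R R' f ψ)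
    (n : ℕ) (x : (R.P n).M) : φ n x - ψ n x ∈ 𝒜.jideal • (⊤ : Submodule 𝒜.A (R'.P n).M) := by
  have h : IsLift R R' 0 fun n ↦ φ n - ψ n :=
    { aug x := by
        rw [LinearMap.sub_apply, map_sub, hφ.aug, hψ.aug, sub_self, LinearMap.zero_apply]
      d n x := by simp only [LinearMap.sub_apply, map_sub, hφ.d, hψ.d] }
  exact h.mem_jideal_smul_top n x

theorem GMod.GenInDeg.of_sum_comp_sub_mem {P N : 𝒜.GMod} {t k : ℤ} (hP : P.GenInDeg t)
    (hN : Module.Finite 𝒜.A N.M) {ι : Type*} [Fintype ι] {r : ι → P.M →ₗ[𝒜.A] N.M}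
    {i : ι → N.M →ₗ[𝒜.A] P.M} (hr : ∀ l, HasDegree (r l) k)
    (h : ∀ x, x - ∑ l, r l (i l x) ∈ 𝒜.jideal • (⊤ : Submodule 𝒜.A N.M)) :
    N.GenInDeg (t + k) := by
  refine genInDeg_of_exists_sub_mem hN fun x ↦ ⟨∑ l, r l (P.proj_s6 t (i l x)),
    sum_mem fun l _ ↦ hr l t _ (proj_mem_s6 t _), ?_⟩
  rw [← sub_add_sub_cancel x (∑ l, r l (i l x)), ← Finset.sum_sub_distrib]
  refine add_mem (h x) (sum_mem fun l _ ↦ ?_)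
  rw [← map_sub]
  exact apply_mem_jideal_smul_top (r l) (hP.sub_proj_mem _)

theorem MinRes.genInDeg_of_sum_comp_eq_id (R : MinRes M) (R' : MinRes N) {ι : Type*} [Fintype ι]
    {r : ι → M.M →ₗ[𝒜.A] N.M} {i : ι → N.M →ₗ[𝒜.A] M.M} {k k' : ℤ}
    (hr : ∀ l, HasDegree (r l) k) (hi : ∀ l, HasDegree (i l) k')
    (h : ∑ l, r l ∘ₗ i l = LinearMap.id) {n : ℕ} {t : ℤ} (ht : (R.P n).GenInDeg t) :
    (R'.P n).GenInDeg (t + k) := by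
  choose ρ hρk hρ using fun l ↦ exists_isLift R R' (hr l)
  choose σ _ hσ using fun l ↦ exists_isLift R' R (hi l)
  have hlift : IsLift R' R' LinearMap.id fun n ↦ ∑ l, ρ l n ∘ₗ σ l n :=
    h ▸ IsLift.sum fun l ↦ (hρ l).comp (hσ l)
  refine ht.of_sum_comp_sub_mem (R'.fg n) (r := (ρ · n)) (i := (σ · n)) (hρk · n) fun x ↦ ?_
  simpa using (IsLift.id R').sub_mem_jideal_smul_top hlift n x

theorem MinRes.genInDeg_of_genInDeg (R R' : MinRes M) {n : ℕ} {t : ℤ} (ht : (R.P n).GenInDeg t) :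
    (R'.P n).GenInDeg t := by
  simpa only [add_zero] using R.genInDeg_of_sum_comp_eq_id R' (ι := Unit)
    (fun _ ↦ HasDegree.id) (fun _ ↦ HasDegree.id) (Fintype.sum_unique _) ht

end Comparison

section Concentrated

variable {M N Q : 𝒜.GMod}

/-- All elements of the graded module `M` are homogeneous of degree `a`. -/
def GMod.IsConcentratedIn (M : 𝒜.GMod) (a : ℤ) : Prop :=
  ∀ x, x ∈ M.grading a

theorem GMod.GenInDeg.isConcentratedIn {a : ℤ} (h : M.GenInDeg a)
    (hM : Module.IsTorsionBySet 𝒜.A M.M 𝒜.jideal) : M.IsConcentratedIn a := fun x ↦ by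
  have hx := apply_eq_zero_of_isTorsionBySet hM LinearMap.id (h.sub_proj_mem x)
  rw [LinearMap.id_apply, sub_eq_zero] at hx
  exact hx ▸ proj_mem_s6 a x

theorem GMod.IsConcentratedIn.hasDegree {a b k : ℤ} (hM : M.IsConcentratedIn a)
    (hN : N.IsConcentratedIn b) (h : a + k = b) (f : M.M →ₗ[𝒜.A] N.M) : HasDegree f k := by
  intro j x hx
  obtain rfl | hj := eq_or_ne j a
  · exact h ▸ hN (f x)
  · have hx0 : x = 0 := by rw [← proj_of_mem_same hx, proj_of_mem_ne (hM x) hj.symm]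
    rw [hx0, map_zero]
    exact zero_mem _

theorem IsTrivialGMod.isConcentratedIn {T : 𝒜.GMod} (hT : IsTrivialGMod T) :
    T.IsConcentratedIn 0 := fun x ↦ by
  refine GMod.mem_of_proj_mem fun j ↦ ?_
  obtain rfl | hj := eq_or_ne j 0
  · exact GMod.proj_mem_s6 0 x
  · have h : T.proj_s6 j x ∈ T.grading j := GMod.proj_mem_s6 j x
    rw [hT.1 j hj, Submodule.mem_bot] at h
    exact h ▸ zero_mem _

theorem IsTrivialGMod.genInDeg_of_isTorsionBySet [IsSemisimpleRing (𝒜.grading 0)] {T : 𝒜.GMod}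
    (hT : IsTrivialGMod T) (hfin : Module.Finite 𝒜.A N.M)
    (htors : Module.IsTorsionBySet 𝒜.A N.M 𝒜.jideal) {s : ℤ} (hs : N.GenInDeg s)
    (RT : MinRes T) (RN : MinRes N) {n : ℕ} {t : ℤ} (ht : (RT.P n).GenInDeg t) :
    (RN.P n).GenInDeg (t + s) := by
  obtain ⟨k, r, i, hri⟩ := hT.exists_sum_comp_eq_id htors
  have hN := hs.isConcentratedIn htors
  exact RT.genInDeg_of_sum_comp_eq_id RN
    (fun l ↦ hT.isConcentratedIn.hasDegree hN (zero_add s) (r l))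
    (fun l ↦ hN.hasDegree hT.isConcentratedIn (add_neg_cancel s) (i l)) hri ht

theorem IsJM.exists_linearMap {JM : 𝒜.GMod} (h : IsJM M JM) :
    ∃ ι : JM.M →ₗ[𝒜.A] M.M, Function.Injective ι ∧
      LinearMap.range ι = 𝒜.jideal • (⊤ : Submodule 𝒜.A M.M) ∧
      ∀ j x, x ∈ JM.grading j ↔ ι x ∈ M.grading j := by
  obtain ⟨e, he⟩ := h
  refine ⟨Submodule.subtype _ ∘ₗ e.toLinearMap, Subtype.val_injective.comp e.injective, ?_, he⟩
  rw [LinearEquiv.range_comp, Submodule.range_subtype]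

theorem IsQuotJM.exists_linearMap (h : IsQuotJM M Q) :
    ∃ π : M.M →ₗ[𝒜.A] Q.M, HasDegree π 0 ∧ Function.Surjective π ∧
      LinearMap.ker π = 𝒜.jideal • (⊤ : Submodule 𝒜.A M.M) := by
  obtain ⟨e, he⟩ := h
  refine ⟨e.symm.toLinearMap ∘ₗ Submodule.mkQ _, hasDegree_zero_iff.2 fun j x hx ↦ ?_,
    e.symm.surjective.comp (Submodule.mkQ_surjective _), ?_⟩
  · exact he j ▸ ⟨x, hx, rfl⟩
  · rw [LinearEquiv.ker_comp, Submodule.ker_mkQ]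

theorem IsQuotJM.isTorsionBySet (h : IsQuotJM M Q) :
    Module.IsTorsionBySet 𝒜.A Q.M 𝒜.jideal := by
  obtain ⟨e, -⟩ := h
  exact isTorsionBySet_of_injective (f := e.toLinearMap) e.injective
    (Module.isTorsionBySet_quotient_ideal_smul M.M 𝒜.jideal)

end Concentrated

section SplitLift

/-- A homogeneous submodule as a graded module, with the induced grading. -/
def GMod.ofSubmodule (M : 𝒜.GMod) (K : Submodule 𝒜.A M.M) (hK : K.IsHomogeneous M.grading) :
    𝒜.GMod where
  M := K
  grading j := (M.grading j).comap (K.subtype.restrictScalars F)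
  sup_eq_top := by
    classical
    refine top_le_iff.1 fun x _ ↦ ?_
    have hx : x = ∑ j ∈ (DirectSum.decompose M.grading x.1).support,
        (⟨M.proj_s6 j x, isHomogeneous_iff.1 hK j x x.2⟩ : K) := by
      ext
      rw [AddSubmonoidClass.coe_finsetSum]
      exact (DirectSum.sum_support_decompose M.grading x.1).symm
    rw [hx]
    exact sum_mem fun j _ ↦ Submodule.mem_iSup_of_mem j (proj_mem_s6 j _)
  indep := iSupIndep_def.2 fun j ↦ Submodule.disjoint_def.2 fun x hx hx' ↦ by
    refine Subtype.ext (Submodule.disjoint_def.1 (M.indep j) x hx ?_)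
    exact (iSup₂_le fun i hi ↦ Submodule.comap_mono (le_iSup₂_of_le i hi le_rfl) :
      _ ≤ (⨆ i ≠ j, M.grading i).comap (K.subtype.restrictScalars F)) hx'
  smul_mem ha hx := M.smul_mem ha hx

/-- A chain map `φ` lifting `π` to resolutions, with a retraction `ρ n` of degree zero for each of
its terms. The retractions need not commute with the differentials. -/
structure SplitLift {M Q : 𝒜.GMod} (RM : MinRes M) (RQ : MinRes Q) (π : M.M →ₗ[𝒜.A] Q.M) where
  φ (n : ℕ) : (RM.P n).M →ₗ[𝒜.A] (RQ.P n).M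
  ρ (n : ℕ) : (RQ.P n).M →ₗ[𝒜.A] (RM.P n).M
  hasDegree_φ (n : ℕ) : HasDegree (φ n) 0
  hasDegree_ρ (n : ℕ) : HasDegree (ρ n) 0
  isLift : IsLift RM RQ π φ
  ρ_φ (n : ℕ) (x : (RM.P n).M) : ρ n (φ n x) = x

namespace SplitLift

variable {M Q : 𝒜.GMod} {RM : MinRes M} {RQ : MinRes Q} {π : M.M →ₗ[𝒜.A] Q.M}
  (S : SplitLift RM RQ π)

/-- The complement `ker ρ_n` of `φ_n`. -/
def compl (n : ℕ) : 𝒜.GMod :=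
  (RQ.P n).ofSubmodule (LinearMap.ker (S.ρ n)) (S.hasDegree_ρ n).isHomogeneous_ker

/-- The inclusion of the complement of `φ_n`. -/
def incl (n : ℕ) : (S.compl n).M →ₗ[𝒜.A] (RQ.P n).M :=
  (LinearMap.ker (S.ρ n)).subtype

/-- The projection onto the complement of `φ_n` along the range of `φ_n`. -/
def toCompl (n : ℕ) : (RQ.P n).M →ₗ[𝒜.A] (S.compl n).M :=
  (LinearMap.id - S.φ n ∘ₗ S.ρ n).codRestrict _ fun x ↦ by
    simp [S.ρ_φ]

theorem hasDegree_incl (n : ℕ) : HasDegree (S.incl n) 0 :=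
  hasDegree_zero_iff.2 fun _ _ hx ↦ hx

theorem incl_injective (n : ℕ) : Function.Injective (S.incl n) :=
  Subtype.val_injective

theorem ρ_incl (n : ℕ) (y : (S.compl n).M) : S.ρ n (S.incl n y) = 0 :=
  y.2

theorem incl_toCompl (n : ℕ) (x : (RQ.P n).M) :
    S.incl n (S.toCompl n x) = x - S.φ n (S.ρ n x) :=
  rfl

theorem toCompl_incl (n : ℕ) (y : (S.compl n).M) : S.toCompl n (S.incl n y) = y :=
  S.incl_injective n (by rw [incl_toCompl, ρ_incl, map_zero, sub_zero])

theorem toCompl_φ (n : ℕ) (x : (RM.P n).M) : S.toCompl n (S.φ n x) = 0 :=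
  S.incl_injective n (by rw [incl_toCompl, ρ_φ, sub_self, map_zero])

theorem hasDegree_toCompl (n : ℕ) : HasDegree (S.toCompl n) 0 :=
  HasDegree.id.sub ((S.hasDegree_φ n).comp (S.hasDegree_ρ n) (add_zero 0))

theorem toCompl_surjective (n : ℕ) : Function.Surjective (S.toCompl n) :=
  fun y ↦ ⟨S.incl n y, S.toCompl_incl n y⟩

theorem φ_injective (n : ℕ) : Function.Injective (S.φ n) :=
  Function.LeftInverse.injective (S.ρ_φ n)

theorem φ_ρ_of_toCompl_eq_zero {n : ℕ} {x : (RQ.P n).M} (hx : S.toCompl n x = 0) :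
    S.φ n (S.ρ n x) = x := by
  rw [← sub_eq_zero, ← neg_sub, ← incl_toCompl, hx, map_zero, neg_zero]

/-- The differential induced by that of `RQ` on the complements. -/
def d (n : ℕ) : GHom (S.compl (n + 1)) (S.compl n) where
  lin := S.toCompl n ∘ₗ (RQ.d n).lin ∘ₗ S.incl (n + 1)
  grad := hasDegree_zero_iff.1 <| (S.hasDegree_toCompl n).comp
    ((RQ.d n).hasDegree.comp (S.hasDegree_incl (n + 1)) (add_zero 0)) (add_zero 0)

theorem d_toCompl (n : ℕ) (x : (RQ.P (n + 1)).M) :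
    (S.d n).lin (S.toCompl (n + 1) x) = S.toCompl n ((RQ.d n).lin x) := by
  simp only [d, LinearMap.comp_apply, incl_toCompl, map_sub, S.isLift.d, toCompl_φ, sub_zero]

theorem toCompl_mem_range_d {n : ℕ} {x : (RQ.P (n + 1)).M} {w : (RM.P (n + 1)).M}
    (h : (RQ.d n).lin (x - S.φ (n + 1) w) = 0) :
    S.toCompl (n + 1) x ∈ LinearMap.range (S.d (n + 1)).lin := by
  obtain ⟨u, hu⟩ := RQ.exists_d_succ_eq h
  refine ⟨S.toCompl (n + 2) u, ?_⟩
  rw [d_toCompl, hu, map_sub, toCompl_φ, sub_zero]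

theorem range_d_eq_ker (n : ℕ) :
    LinearMap.range (S.d (n + 2)).lin = LinearMap.ker (S.d (n + 1)).lin := by
  refine le_antisymm ?_ fun y hy ↦ ?_
  · rintro _ ⟨y, rfl⟩
    obtain ⟨x, rfl⟩ := S.toCompl_surjective _ y
    rw [LinearMap.mem_ker, d_toCompl, d_toCompl, RQ.d_d_apply, map_zero]
  · obtain ⟨x, rfl⟩ := S.toCompl_surjective _ y
    rw [LinearMap.mem_ker, d_toCompl] at hy
    have hdx := S.φ_ρ_of_toCompl_eq_zero hy
    obtain ⟨w, hw⟩ : ∃ w, (RM.d (n + 1)).lin w = S.ρ (n + 1) ((RQ.d (n + 1)).lin x) := by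
      refine RM.exists_d_succ_eq (S.φ_injective n ?_)
      rw [← S.isLift.d, hdx, RQ.d_d_apply, map_zero]
    refine S.toCompl_mem_range_d (w := w) ?_
    rw [map_sub, S.isLift.d, hw, hdx, sub_self]

theorem range_d_le (n : ℕ) :
    LinearMap.range (S.d n).lin ≤ 𝒜.jideal • (⊤ : Submodule 𝒜.A (S.compl n).M) := by
  rintro _ ⟨y, rfl⟩
  exact apply_mem_jideal_smul_top (S.toCompl n) (RQ.minimal n ⟨_, rfl⟩)

theorem φ_ρ_zero (hπ : Function.Surjective π) (y : (RQ.P 0).M) : S.φ 0 (S.ρ 0 y) = y := by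
  have htop : LinearMap.range (S.φ 0) = ⊤ := by
    refine GMod.eq_top_of_sup_jideal_smul_top (RQ.fg 0) (S.hasDegree_φ 0).isHomogeneous_range
      (top_le_iff.1 fun y _ ↦ ?_)
    obtain ⟨m, hm⟩ := hπ (RQ.aug.lin y)
    obtain ⟨x, rfl⟩ := RM.aug_surj m
    have hy : RQ.aug.lin (y - S.φ 0 x) = 0 := by rw [map_sub, S.isLift.aug, hm, sub_self]
    exact Submodule.mem_sup.2 ⟨S.φ 0 x, ⟨x, rfl⟩, y - S.φ 0 x,
      RQ.minimal 0 (RQ.exists_d_zero_eq hy), add_sub_cancel _ _⟩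
  obtain ⟨x, rfl⟩ := LinearMap.range_eq_top.1 htop y
  rw [S.ρ_φ]

instance projective_compl (n : ℕ) : Module.Projective 𝒜.A (S.compl n).M :=
  have := RQ.projective n
  .of_split (S.incl n) (S.toCompl n) (LinearMap.ext (S.toCompl_incl n))

variable {L : 𝒜.GMod} {ι : L.M →ₗ[𝒜.A] M.M}

/-- `ε` is the augmentation of the complement onto the kernel `L` of `π`: the map induced by
`aug ∘ ρ₀ ∘ d₀`, which is the connecting map as `ρ₀` is inverse to `φ₀`. -/
def IsAug (ι : L.M →ₗ[𝒜.A] M.M) (ε : GHom (S.compl 1) L) : Prop :=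
  ∀ x, ι (ε.lin (S.toCompl 1 x)) = RM.aug.lin (S.ρ 0 ((RQ.d 0).lin x))

theorem exists_isAug (hπ : Function.Surjective π) (hker : LinearMap.range ι = LinearMap.ker π)
    (hι : ∀ j x, x ∈ L.grading j ↔ ι x ∈ M.grading j) : ∃ ε, S.IsAug ι ε := by
  let f := RM.aug.lin ∘ₗ S.ρ 0 ∘ₗ (RQ.d 0).lin ∘ₗ S.incl 1
  have hf : HasDegree f 0 := RM.aug.hasDegree.comp ((S.hasDegree_ρ 0).comp
    ((RQ.d 0).hasDegree.comp (S.hasDegree_incl 1) (add_zero 0)) (add_zero 0)) (add_zero 0)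
  obtain ⟨ε, hε⟩ := exists_comp_eq_of_range_le (f := f) (g := ι) <| by
    rintro _ ⟨y, rfl⟩
    rw [hker, LinearMap.mem_ker, LinearMap.comp_apply, ← S.isLift.aug, LinearMap.comp_apply,
      S.φ_ρ_zero hπ, LinearMap.comp_apply, RQ.aug_d_apply]
  replace hε (y) : ι (ε y) = f y := LinearMap.congr_fun hε y
  refine ⟨⟨ε, fun j y hy ↦ ?_⟩, fun x ↦ ?_⟩
  · rw [hι, hε]
    exact hasDegree_zero_iff.1 hf j y hy
  · simp only [hε, f, LinearMap.comp_apply, incl_toCompl, map_sub, S.isLift.d, ρ_φ,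
      RM.aug_d_apply, sub_zero]

variable {S} {ε : GHom (S.compl 1) L}

theorem IsAug.surjective (hε : S.IsAug ι ε) (hι : Function.Injective ι)
    (hker : LinearMap.range ι ≤ LinearMap.ker π) : Function.Surjective ε.lin := by
  intro y
  obtain ⟨z, hz⟩ := RM.aug_surj (ι y)
  have hφz : RQ.aug.lin (S.φ 0 z) = 0 := by
    rw [S.isLift.aug, hz]
    exact hker ⟨y, rfl⟩
  obtain ⟨u, hu⟩ := RQ.exists_d_zero_eq hφz
  refine ⟨S.toCompl 1 u, hι ?_⟩
  rw [hε, hu, ρ_φ, hz]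

theorem IsAug.range_d_eq_ker (hε : S.IsAug ι ε) (hι : Function.Injective ι)
    (hπ : Function.Surjective π) : LinearMap.range (S.d 1).lin = LinearMap.ker ε.lin := by
  refine le_antisymm ?_ fun y hy ↦ ?_
  · rintro _ ⟨y, rfl⟩
    obtain ⟨x, rfl⟩ := S.toCompl_surjective _ y
    refine hι ?_
    rw [d_toCompl, hε, RQ.d_d_apply, map_zero, map_zero, map_zero]
  · obtain ⟨x, rfl⟩ := S.toCompl_surjective _ y
    obtain ⟨w, hw⟩ : ∃ w, (RM.d 0).lin w = S.ρ 0 ((RQ.d 0).lin x) := by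
      refine RM.exists_d_zero_eq ?_
      rw [← hε, LinearMap.mem_ker.1 hy, map_zero]
    refine S.toCompl_mem_range_d (w := w) ?_
    rw [map_sub, S.isLift.d, hw, S.φ_ρ_zero hπ, sub_self]

/-- The complements `ker ρ_{n+1}` form a minimal resolution of the kernel of `π`. -/
def IsAug.minRes (hε : S.IsAug ι ε) (hι : Function.Injective ι) (hπ : Function.Surjective π)
    (hker : LinearMap.range ι = LinearMap.ker π) : MinRes L where
  P n := S.compl (n + 1)
  d n := S.d (n + 1)
  aug := ε
  fg n := have := RQ.fg (n + 1); .of_surjective (S.toCompl (n + 1)) (S.toCompl_surjective _)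
  projective n := S.projective_compl (n + 1)
  aug_surj := hε.surjective hι hker.le
  exact_aug := hε.range_d_eq_ker hι hπ
  exact := S.range_d_eq_ker
  minimal n := S.range_d_le (n + 1)

end SplitLift

theorem exists_splitLift [IsSemisimpleRing (𝒜.grading 0)] {M Q : 𝒜.GMod} (RM : MinRes M)
    (RQ : MinRes Q) {π : M.M →ₗ[𝒜.A] Q.M} (hπ : HasDegree π 0) {t : ℕ → ℤ}
    (hRM : ∀ n, (RM.P n).GenInDeg (t n)) (hRQ : ∀ n, (RQ.P n).GenInDeg (t n))
    (hinj : ∀ x ∈ M.grading (t 0), π x = 0 → x = 0) : Nonempty (SplitLift RM RQ π) := by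
  obtain ⟨φ, hφdeg, hφ⟩ := exists_isLift RM RQ hπ
  have hzero (n) {x} (hx : x ∈ (RM.P n).grading (t n)) (hx' : ∃ y, (RM.d n).lin y = x) : x = 0 := by
    have hproj := (hRM n).proj_eq_zero_of_mem (RM.minimal n hx')
    rwa [GMod.proj_of_mem_same hx] at hproj
  have hret (n) (h : ∀ x ∈ (RM.P n).grading (t n), φ n x = 0 → x = 0) :=
    exists_comp_eq_id_of_injOn (RQ.projective n) (hφdeg n) (hRM n) (hRQ n) h
  have hφinj (n) : ∀ x ∈ (RM.P n).grading (t n), φ n x = 0 → x = 0 := by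
    induction n with
    | zero =>
      refine fun x hx hφx ↦ hzero 0 hx (RM.exists_d_zero_eq (hinj _ (RM.aug.grad _ x hx) ?_))
      rw [← hφ.aug, hφx, map_zero]
    | succ n ih =>
      obtain ⟨ρ, -, hρ⟩ := hret n ih
      refine fun x hx hφx ↦ hzero (n + 1) hx (RM.exists_d_succ_eq ?_)
      rw [← LinearMap.id_apply (R := 𝒜.A) ((RM.d n).lin x), ← hρ, LinearMap.comp_apply, ← hφ.d,
        hφx, map_zero, map_zero]
  choose ρ hρdeg hρ using fun n ↦ hret n (hφinj n)
  exact ⟨⟨φ, ρ, hφdeg, hρdeg, hφ, fun n ↦ LinearMap.congr_fun (hρ n)⟩⟩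

end SplitLift

section Ext

variable {T M : 𝒜.GMod}

theorem precompF_d_eq_zero (hT : Module.IsTorsionBySet 𝒜.A T.M 𝒜.jideal) (R : MinRes M) (n : ℕ)
    (f : HomSp T R n) : precompF T (R.d n).lin f = 0 :=
  LinearMap.ext fun _ ↦ apply_eq_zero_of_isTorsionBySet hT f (R.minimal n ⟨_, rfl⟩)

theorem cocyc_eq_top (hT : Module.IsTorsionBySet 𝒜.A T.M 𝒜.jideal) (R : MinRes M) (n : ℕ) :
    cocyc T R n = ⊤ :=
  top_le_iff.1 fun f _ ↦ precompF_d_eq_zero hT R n f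

theorem extRel_eq_bot (hT : Module.IsTorsionBySet 𝒜.A T.M 𝒜.jideal) (R : MinRes M) (n : ℕ) :
    extRel T R n = ⊥ := by
  have h : cobound T R n = ⊥ := by
    cases n with
    | zero => rfl
    | succ n => exact LinearMap.range_eq_bot.2 (LinearMap.ext (precompF_d_eq_zero hT R n))
  rw [extRel, h, Submodule.comap_bot, Submodule.ker_subtype]

/-- As `T` is killed by the radical, `Ext^n(M, T)` is the space of all maps from the `n`-th term
of a minimal resolution of `M` to `T`. -/
def extEquiv (hT : Module.IsTorsionBySet 𝒜.A T.M 𝒜.jideal) (R : MinRes M) (n : ℕ) :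
    ExtQ T R n ≃ₗ[F] HomSp T R n :=
  (Submodule.quotEquivOfEqBot _ (extRel_eq_bot hT R n)).trans
    (LinearEquiv.ofTop _ (cocyc_eq_top hT R n))

theorem extComp_eq_top (hT : Module.IsTorsionBySet 𝒜.A T.M 𝒜.jideal) (R : MinRes M) {n : ℕ}
    {t : ℤ} (ht : (R.P n).GenInDeg t) : extComp T R n t = ⊤ := by
  have h : homDeg T R n t = ⊤ := top_le_iff.1 fun f _ i hi x hx ↦
    apply_eq_zero_of_isTorsionBySet hT f
      (ht.mem_jideal_smul_top_iff.2 (GMod.proj_of_mem_ne hx hi))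
  rw [extComp, h, Submodule.comap_top, Submodule.map_top, Submodule.range_mkQ]

theorem nonempty_homSp_equiv (hT : Module.IsTorsionBySet 𝒜.A T.M 𝒜.jideal) (R R' : MinRes M)
    (n : ℕ) : Nonempty (HomSp T R n ≃ₗ[F] HomSp T R' n) := by
  obtain ⟨φ, -, hφ⟩ := exists_isLift R R' HasDegree.id
  obtain ⟨ψ, -, hψ⟩ := exists_isLift R' R HasDegree.id
  have inverse {R R' : MinRes M} {φ : ∀ n, (R.P n).M →ₗ[𝒜.A] (R'.P n).M}
      {ψ : ∀ n, (R'.P n).M →ₗ[𝒜.A] (R.P n).M} (hφ : IsLift R R' .id φ) (hψ : IsLift R' R .id ψ) :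
      precompF T (φ n) ∘ₗ precompF T (ψ n) = .id := by
    ext f x
    have hx := apply_eq_zero_of_isTorsionBySet hT f
      ((hψ.comp hφ).sub_mem_jideal_smul_top (.id R) n x)
    rwa [map_sub, sub_eq_zero] at hx
  exact ⟨.ofLinearMap (precompF T (ψ n)) (precompF T (φ n)) (inverse hψ hφ) (inverse hφ hψ)⟩

variable {Q L : 𝒜.GMod} {RM : MinRes M} {RQ : MinRes Q} {π : M.M →ₗ[𝒜.A] Q.M}

namespace SplitLift

theorem precompF_toCompl_injective (S : SplitLift RM RQ π) (n : ℕ) :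
    Function.Injective (precompF T (S.toCompl n)) :=
  fun _ _ h ↦ (LinearMap.cancel_right (S.toCompl_surjective n)).1 h

theorem precompF_φ_surjective (S : SplitLift RM RQ π) (n : ℕ) :
    Function.Surjective (precompF T (S.φ n)) :=
  fun f ↦ ⟨f ∘ₗ S.ρ n, LinearMap.ext fun x ↦ congrArg f (S.ρ_φ n x)⟩

theorem exact_precompF (S : SplitLift RM RQ π) (n : ℕ) :
    Function.Exact (precompF T (S.toCompl n)) (precompF T (S.φ n)) := by
  refine fun f ↦ ⟨fun hf ↦ ⟨f ∘ₗ S.incl n, LinearMap.ext fun x ↦ ?_⟩, ?_⟩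
  · have hfφ : f (S.φ n (S.ρ n x)) = 0 := LinearMap.congr_fun hf (S.ρ n x)
    change f (S.incl n (S.toCompl n x)) = f x
    rw [incl_toCompl, map_sub, hfφ, sub_zero]
  · rintro ⟨g, rfl⟩
    refine LinearMap.ext fun x ↦ (congrArg g (S.toCompl_φ n x)).trans (map_zero g)

variable {S : SplitLift RM RQ π} {ι : L.M →ₗ[𝒜.A] M.M} {ε : GHom (S.compl 1) L}

theorem IsAug.genInDeg (hε : S.IsAug ι ε) (hι : Function.Injective ι) (hπ : Function.Surjective π)
    (hker : LinearMap.range ι = LinearMap.ker π) (RL : MinRes L) {n : ℕ} {t : ℤ}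
    (ht : (RQ.P (n + 1)).GenInDeg t) : (RL.P n).GenInDeg t :=
  (hε.minRes hι hπ hker).genInDeg_of_genInDeg RL
    (ht.of_surjective (S.hasDegree_toCompl (n + 1)) (S.toCompl_surjective (n + 1)))

theorem IsAug.exists_exact (hε : S.IsAug ι ε) (hι : Function.Injective ι)
    (hπ : Function.Surjective π) (hker : LinearMap.range ι = LinearMap.ker π)
    (hT : Module.IsTorsionBySet 𝒜.A T.M 𝒜.jideal) (RL : MinRes L) (n : ℕ) :
    ∃ (α : ExtQ T RL n →ₗ[F] ExtQ T RQ (n + 1)) (β : ExtQ T RQ (n + 1) →ₗ[F] ExtQ T RM (n + 1)),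
      Function.Injective α ∧ Function.Surjective β ∧
        LinearMap.range α = LinearMap.ker β := by
  obtain ⟨e⟩ := nonempty_homSp_equiv hT RL (hε.minRes hι hπ hker) n
  let eL : ExtQ T RL n ≃ₗ[F] (S.compl (n + 1)).M →ₗ[𝒜.A] T.M := (extEquiv hT RL n).trans e
  let eQ := extEquiv hT RQ (n + 1)
  let eM := extEquiv hT RM (n + 1)
  refine ⟨eQ.symm.toLinearMap ∘ₗ precompF T (S.toCompl (n + 1)) ∘ₗ eL.toLinearMap,
    eM.symm.toLinearMap ∘ₗ precompF T (S.φ (n + 1)) ∘ₗ eQ.toLinearMap,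
    eQ.symm.injective.comp ((S.precompF_toCompl_injective _).comp eL.injective),
    eM.symm.surjective.comp ((S.precompF_φ_surjective _).comp eQ.surjective), ?_⟩
  refine (LinearMap.exact_iff.1 <| (S.exact_precompF (n + 1)).of_ladder_linearEquiv_of_exact
    (e₁ := eL.symm) (e₂ := eQ.symm) (e₃ := eM.symm) (LinearMap.ext fun _ ↦ ?_)
    (LinearMap.ext fun _ ↦ ?_)).symm
  · simp only [LinearMap.comp_apply, LinearEquiv.coe_coe, LinearEquiv.apply_symm_apply]
  · simp only [LinearMap.comp_apply, LinearEquiv.coe_coe, LinearEquiv.apply_symm_apply]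

end SplitLift

end Ext

end GradedAlg

open GradedAlg in
theorem ext_exact_sequence_of_radical_general {F : Type} [Field F] {𝒜 : GradedAlg F}
    [IsSemisimpleRing (𝒜.grading 0)] {T M JM Q : 𝒜.GMod} (hT : IsTrivialGMod T) {δ : ℕ → ℤ}
    (hδ : δ 0 = 0) {s : ℤ} (hTδ : ∃ R : MinRes T, ∀ n, (R.P n).GenInDeg (δ n))
    (hMδ : ∃ R : MinRes M, ∀ n, (R.P n).GenInDeg (δ n + s)) (hJM : IsJM M JM) (hQ : IsQuotJM M Q)
    (RJ : MinRes JM) (RQ : MinRes Q) (RM : MinRes M) (n : ℕ) :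
    ∃ (α : ExtQ T RJ n →ₗ[F] ExtQ T RQ (n + 1)) (β : ExtQ T RQ (n + 1) →ₗ[F] ExtQ T RM (n + 1)),
      Function.Injective α ∧ Function.Surjective β ∧
      LinearMap.range α = LinearMap.ker β ∧
      extComp T RJ n (δ (n + 1) + s) = ⊤ ∧ extComp T RQ (n + 1) (δ (n + 1) + s) = ⊤ ∧
      extComp T RM (n + 1) (δ (n + 1) + s) = ⊤ := by
  obtain ⟨⟨RT, hRT⟩, R, hR⟩ := hTδ, hMδ
  obtain ⟨ι, hι, hιJ, hιdeg⟩ := hJM.exists_linearMap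
  obtain ⟨π, hπdeg, hπ, hπJ⟩ := hQ.exists_linearMap
  have hker : LinearMap.range ι = LinearMap.ker π := hιJ.trans hπJ.symm
  have hRM (n) : (RM.P n).GenInDeg (δ n + s) := R.genInDeg_of_genInDeg RM (hR n)
  have hM : M.GenInDeg (δ 0 + s) := (hRM 0).of_surjective RM.aug.hasDegree RM.aug_surj
  have hQs : Q.GenInDeg s := zero_add s ▸ hδ ▸ hM.of_surjective hπdeg hπ
  have hQfin : Module.Finite 𝒜.A Q.M := have := RQ.fg 0; .of_surjective _ RQ.aug_surj
  have hRQ (n) : (RQ.P n).GenInDeg (δ n + s) :=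
    hT.genInDeg_of_isTorsionBySet hQfin hQ.isTorsionBySet hQs RT RQ (hRT n)
  have hπinj : ∀ x ∈ M.grading (δ 0 + s), π x = 0 → x = 0 := fun x hx hπx ↦ by
    rw [← GMod.proj_of_mem_same hx]
    exact hM.proj_eq_zero_of_mem (hπJ ▸ hπx)
  obtain ⟨S⟩ := exists_splitLift RM RQ hπdeg hRM hRQ hπinj
  obtain ⟨ε, hε⟩ := S.exists_isAug hπ hker hιdeg
  have hTJ := hT.isTorsionBySet
  obtain ⟨α, β, hα, hβ, hαβ⟩ := hε.exists_exact hι hπ hker hTJ RJ n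
  exact ⟨α, β, hα, hβ, hαβ, extComp_eq_top hTJ RJ (hε.genInDeg hι hπ hker RJ (hRQ (n + 1))),
    extComp_eq_top hTJ RQ (hRQ _), extComp_eq_top hTJ RM (hRM _)⟩

open GradedAlg in
/-- Let `A` be piecewise-Koszul and `M` a piecewise-Koszul module generated in degree `s`.
Then for every `n ≥ 1` there is an exact sequence
`0 → Ext^{n−1}_A(JM,A_0) → Ext^n_A(M/JM,A_0) → Ext^n_A(M,A_0) → 0`
and, in the shift-grading, all three modules are concentrated in degree `δ^d_p(n)+s`. -/
theorem ext_exact_sequence_of_radical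
    {F : Type} [Field F] (𝒜 : GradedAlg F) (hA : 𝒜.Standing)
    (p d : ℕ) (hp : 2 ≤ p) (hpd : p ≤ d)
    (T : 𝒜.GMod) (hT : IsTrivialGMod T) (hpk : 𝒜.IsPKAlg p d T)
    (M : 𝒜.GMod) (hfg : Module.Finite 𝒜.A M.M) (s : ℤ)
    (hMs : M.GenInDeg s) (hMpk : 𝒜.IsPKMod p d s M)
    (JM Q : 𝒜.GMod) (hJM : IsJM M JM) (hQ : IsQuotJM M Q)
    (RJ : MinRes JM) (RQ : MinRes Q) (RM : MinRes M)
    (n : ℕ) (hn : 1 ≤ n) :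
    ∃ (α : ExtQ T RJ (n - 1) →ₗ[F] ExtQ T RQ n) (β : ExtQ T RQ n →ₗ[F] ExtQ T RM n),
      Function.Injective α ∧ Function.Surjective β ∧
      LinearMap.range α = LinearMap.ker β ∧
      extComp T RJ (n - 1) ((jump d p n : ℤ) + s) = ⊤ ∧
      extComp T RQ n ((jump d p n : ℤ) + s) = ⊤ ∧
      extComp T RM n ((jump d p n : ℤ) + s) = ⊤ := by
  obtain ⟨n, rfl⟩ := Nat.exists_eq_add_of_le' hn
  have := hA.semisimple
  exact ext_exact_sequence_of_radical_general hT (δ := fun n ↦ jump d p n) (by simp [jump])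
    (by simpa only [IsPKAlg, IsPKMod, add_zero] using hpk) hMpk hJM hQ RJ RQ RM n
end
end
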